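/- arXiv:1205.5134 — 12 statements merged into one kernel-verified Lean document; each statement's English description precedes it below -/
import Mathlib

section
/- Let K be a field, n ≥ 1, and let σ, τ be ring automorphisms of K such that σ∘τ = τ∘σ, σⁿ = id, and τ² = id. Let γ, θ ∈ K satisfy σ(γ) = γ, τ(γ) = γ, σ(θ) = θ and τ(θ) = θ. Then the set A = {α_θ(X,Y) : X, Y ∈ D} is a subring of the 2n×2n matrix ring over K: it contains 0 and the identity matrix and is closed under addition, negation and multiplication; moreover the multiplication rule α_θ(X,Y)·α_θ(U,V) = α_θ(XU + θ·τ(Y)V, YU + τ(X)V) holds for all X, Y, U, V ∈ M_n(K). -/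
open Matrix

noncomputable section

/-- The matrix `Γ` of the left-regular representation of the generator `e` of the
cyclic algebra `(K/F, σ, γ)`: the `(i+1, i)` entries are `1`, the `(0, n-1)` entry is `γ`. -/
def Gam (n : ℕ) {K : Type} [Field K] (γ : K) : Matrix (Fin n) (Fin n) K :=
  Matrix.of fun i j =>
    if (i : ℕ) = (j : ℕ) + 1 then (1 : K)
    else if (i : ℕ) = 0 ∧ (j : ℕ) = n - 1 then γ else 0

/-- The image `D` of the cyclic algebra `(K/F, σ, γ)` under its left-regular representation:
matrices `∑ k, diag(c_k, σ(c_k), …, σ^{n-1}(c_k)) * Γ^k`. -/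
def cyclicRep (n : ℕ) {K : Type} [Field K] (σ : RingAut K) (γ : K) :
    Set (Matrix (Fin n) (Fin n) K) :=
  {M | ∃ c : Fin n → K,
    M = ∑ k : Fin n, Matrix.diagonal (fun i : Fin n => (σ ^ (i : ℕ)) (c k)) * (Gam n γ) ^ (k : ℕ)}

/-- The iterated construction `α_θ(X, Y) = [[X, θ·τ(Y)], [Y, τ(X)]]`. -/
def alphaTheta (n : ℕ) {K : Type} [Field K] (θ : K) (τ : RingAut K)
    (X Y : Matrix (Fin n) (Fin n) K) :
    Matrix (Fin n ⊕ Fin n) (Fin n ⊕ Fin n) K :=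
  Matrix.fromBlocks X (θ • Y.map ⇑τ) Y (X.map ⇑τ)

/-- The iterated code `A = {α_θ(X,Y) : X, Y ∈ D}`. -/
def iterCode (n : ℕ) {K : Type} [Field K] (σ τ : RingAut K) (γ θ : K) :
    Set (Matrix (Fin n ⊕ Fin n) (Fin n ⊕ Fin n) K) :=
  {M | ∃ X ∈ cyclicRep n σ γ, ∃ Y ∈ cyclicRep n σ γ, M = alphaTheta n θ τ X Y}


section helpers
variable {n : ℕ} {K : Type} [Field K]

def Dg (n : ℕ) {K : Type} [Field K] (σ : RingAut K) (c : K) : Matrix (Fin n) (Fin n) K :=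
  Matrix.diagonal (fun i : Fin n => (σ ^ (i : ℕ)) c)

lemma mem_iff {σ : RingAut K} {γ : K} {M : Matrix (Fin n) (Fin n) K} :
    M ∈ cyclicRep n σ γ ↔ ∃ c : Fin n → K, M = ∑ k : Fin n, Dg n σ (c k) * (Gam n γ) ^ (k : ℕ) :=
  Iff.rfl

lemma Dg_zero (σ : RingAut K) : Dg n σ 0 = 0 := by simp [Dg]

lemma Dg_one (σ : RingAut K) : Dg n σ 1 = 1 := by simp [Dg]

lemma Dg_add (σ : RingAut K) (a b : K) : Dg n σ (a + b) = Dg n σ a + Dg n σ b := by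
  simp [Dg]

lemma Dg_neg (σ : RingAut K) (a : K) : Dg n σ (-a) = - Dg n σ a := by
  simp [Dg]

lemma Dg_mul (σ : RingAut K) (a b : K) : Dg n σ (a * b) = Dg n σ a * Dg n σ b := by
  simp [Dg]

lemma pow_fix {σ : RingAut K} {a : K} (h : σ a = a) (k : ℕ) : (σ ^ k) a = a := by
  induction k with
  | zero => simp
  | succ k ih => rw [pow_succ, RingAut.mul_apply, h, ih]

lemma Dg_fix {σ : RingAut K} {a : K} (h : σ a = a) : Dg n σ a = a • (1 : Matrix _ _ K) := by
  simp only [Dg, pow_fix h]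
  rw [Matrix.smul_one_eq_diagonal]

lemma zero_mem' (σ : RingAut K) (γ : K) : (0 : Matrix _ _ K) ∈ cyclicRep n σ γ :=
  mem_iff.2 ⟨0, by simp [Dg_zero]⟩

lemma add_mem' {σ : RingAut K} {γ : K} {M N : Matrix _ _ K} (hM : M ∈ cyclicRep n σ γ)
    (hN : N ∈ cyclicRep n σ γ) : M + N ∈ cyclicRep n σ γ := by
  obtain ⟨c, rfl⟩ := mem_iff.1 hM
  obtain ⟨d, rfl⟩ := mem_iff.1 hN
  exact mem_iff.2 ⟨c + d, by simp [Dg_add, add_mul, Finset.sum_add_distrib]⟩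

lemma neg_mem' {σ : RingAut K} {γ : K} {M : Matrix _ _ K} (hM : M ∈ cyclicRep n σ γ) :
    -M ∈ cyclicRep n σ γ := by
  obtain ⟨c, rfl⟩ := mem_iff.1 hM
  exact mem_iff.2 ⟨-c, by simp [Dg_neg]⟩

lemma sum_mem'' {σ : RingAut K} {γ : K} {ι : Type} (s : Finset ι) (f : ι → Matrix _ _ K)
    (h : ∀ i ∈ s, f i ∈ cyclicRep n σ γ) : ∑ i ∈ s, f i ∈ cyclicRep n σ γ :=
  Finset.sum_induction f (· ∈ cyclicRep n σ γ) (fun _ _ => add_mem') (zero_mem' σ γ) h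

lemma mul_Gam (M : Matrix (Fin n) (Fin n) K) (γ : K) (i j : Fin n) :
    (M * Gam n γ) i j = if h : (j : ℕ) + 1 < n then M i ⟨j + 1, h⟩ else
      M i ⟨0, j.pos⟩ * γ := by
  rw [Matrix.mul_apply]
  split_ifs with h
  · rw [Finset.sum_eq_single ⟨j + 1, h⟩]
    · simp [Gam]
    · intro b _ hb
      have h1 : (b : ℕ) ≠ j + 1 := fun e => hb (Fin.ext e)
      have h2 : ¬ ((b : ℕ) = 0 ∧ (j : ℕ) = n - 1) := by omega
      simp [Gam, h1, h2]
    · simp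
  · have hj : (j : ℕ) = n - 1 := by omega
    rw [Finset.sum_eq_single ⟨0, j.pos⟩]
    · simp [Gam, hj]
    · intro b _ hb
      have h1 : (b : ℕ) ≠ j + 1 := by omega
      have h2 : ¬ ((b : ℕ) = 0 ∧ (j : ℕ) = n - 1) := fun e => hb (Fin.ext e.1)
      simp only [Gam, Matrix.of_apply, h1, h2, if_false, mul_zero]
    · simp

lemma Gam_pow (γ : K) (k : ℕ) (hk : k ≤ n) (i j : Fin n) :
    (Gam n γ ^ k) i j = if (i : ℕ) = j + k then 1 else if (i : ℕ) + n = j + k then γ else 0 := by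
  induction k generalizing i j with
  | zero =>
    have : ¬ ((i : ℕ) + n = j) := by omega
    simp [Matrix.one_apply, Fin.ext_iff, this]
  | succ k ih =>
    rw [pow_succ, mul_Gam]
    split_ifs with h h1 h2 h1 h2 <;> rw [ih (by omega)]
    · rw [if_pos (by simp; omega)]
    · rw [if_neg (by simp; omega), if_pos (by simp; omega)]
    · rw [if_neg (by simp; omega), if_neg (by simp; omega)]
    · omega
    · rw [if_pos (by simp; omega), one_mul]
    · rw [if_neg (by simp; omega), if_neg (by simp; omega), zero_mul]

lemma Gam_pow_n (γ : K) : Gam n γ ^ n = γ • (1 : Matrix _ _ K) := by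
  ext i j
  have : ¬ ((i : ℕ) = j + n) := by omega
  rw [Gam_pow γ n le_rfl, if_neg this]
  simp [Matrix.one_apply, Fin.ext_iff]

lemma mono_mem {σ : RingAut K} {γ : K} (hn : 1 ≤ n) (hσγ : σ γ = γ) (m : ℕ) (c : K) :
    Dg n σ c * Gam n γ ^ m ∈ cyclicRep n σ γ := by
  induction m using Nat.strong_induction_on generalizing c with
  | _ m ih =>
    by_cases h : m < n
    · refine mem_iff.2 ⟨Pi.single ⟨m, h⟩ c, ?_⟩
      rw [Finset.sum_eq_single ⟨m, h⟩]
      · simp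
      · intro b _ hb
        simp [Pi.single_eq_of_ne hb, Dg_zero]
      · simp
    · have h2 := ih (m - n) (by omega) (c * γ)
      rw [Dg_mul, Dg_fix hσγ, ← Gam_pow_n, mul_assoc, ← pow_add] at h2
      rwa [show n + (m - n) = m by omega] at h2

lemma Gam_comm {σ : RingAut K} {γ : K} (hσn : σ ^ n = 1) (c : K) :
    Gam n γ * Dg n σ (σ c) = Dg n σ c * Gam n γ := by
  ext i j
  rw [Dg, Dg, Matrix.mul_diagonal, Matrix.diagonal_mul]
  have e : (σ ^ (j : ℕ)) (σ c) = (σ ^ ((j : ℕ) + 1)) c := by rw [pow_succ, RingAut.mul_apply]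
  rw [e]
  simp only [Gam, Matrix.of_apply]
  split_ifs with h1 h2
  · rw [h1, one_mul, mul_one]
  · have : (j : ℕ) + 1 = n := by omega
    rw [this, hσn, h2.1, pow_zero, mul_comm]
  · simp

lemma Gam_pow_comm {σ : RingAut K} {γ : K} (hσn : σ ^ n = 1) (k : ℕ) (c : K) :
    Gam n γ ^ k * Dg n σ ((σ ^ k) c) = Dg n σ c * Gam n γ ^ k := by
  induction k generalizing c with
  | zero => simp
  | succ k ih =>
    rw [pow_succ, pow_succ', RingAut.mul_apply, mul_assoc, Gam_comm hσn, ← mul_assoc, ih,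
      mul_assoc]

lemma mul_mem'' {σ : RingAut K} {γ : K} (hn : 1 ≤ n) (hσγ : σ γ = γ) (hσn : σ ^ n = 1)
    {M N : Matrix _ _ K} (hM : M ∈ cyclicRep n σ γ)
    (hN : N ∈ cyclicRep n σ γ) : M * N ∈ cyclicRep n σ γ := by
  obtain ⟨c, rfl⟩ := mem_iff.1 hM
  obtain ⟨d, rfl⟩ := mem_iff.1 hN
  rw [Finset.sum_mul_sum]
  refine sum_mem'' _ _ fun k _ => sum_mem'' _ _ fun l _ => ?_
  obtain ⟨b, hb⟩ := (σ ^ (k : ℕ)).surjective (d l)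
  have : Dg n σ (c k) * Gam n γ ^ (k : ℕ) * (Dg n σ (d l) * Gam n γ ^ (l : ℕ)) =
      Dg n σ (c k * b) * Gam n γ ^ ((k : ℕ) + l) := by
    rw [← hb, mul_assoc, ← mul_assoc (Gam n γ ^ (k : ℕ)), Gam_pow_comm hσn, Dg_mul, pow_add]
    simp only [mul_assoc]
  rw [this]
  exact mono_mem hn hσγ _ _

lemma fix_smul_mem {σ : RingAut K} {γ θ : K} (hσθ : σ θ = θ) {M : Matrix _ _ K}
    (hM : M ∈ cyclicRep n σ γ) : θ • M ∈ cyclicRep n σ γ := by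
  obtain ⟨c, rfl⟩ := mem_iff.1 hM
  exact mem_iff.2 ⟨fun k => θ * c k, by simp [Dg_mul, Dg_fix hσθ, Finset.smul_sum]⟩

lemma map_mem' {σ τ : RingAut K} {γ : K} (hcomm : σ * τ = τ * σ) (hτγ : τ γ = γ)
    {M : Matrix _ _ K} (hM : M ∈ cyclicRep n σ γ) : M.map ⇑τ ∈ cyclicRep n σ γ := by
  obtain ⟨c, rfl⟩ := mem_iff.1 hM
  refine mem_iff.2 ⟨fun k => τ (c k), ?_⟩
  have hG : (τ : K →+* K).mapMatrix (Gam n γ) = Gam n γ := by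
    ext i j
    simp only [RingHom.mapMatrix_apply, Matrix.map_apply, Gam, Matrix.of_apply]
    split_ifs <;> simp [hτγ]
  have hD : ∀ a, (τ : K →+* K).mapMatrix (Dg n σ a) = Dg n σ (τ a) := by
    intro a
    have hk : ∀ k : ℕ, τ ((σ ^ k) a) = (σ ^ k) (τ a) := fun k => by
      have : σ ^ k * τ = τ * σ ^ k := (Commute.pow_left hcomm k)
      rw [← RingAut.mul_apply, ← this, RingAut.mul_apply]
    simp only [RingHom.mapMatrix_apply, Dg]
    rw [Matrix.diagonal_map (map_zero _)]
    congr 1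
    ext i
    exact hk i
  change (τ : K →+* K).mapMatrix _ = _
  simp only [map_sum, map_mul, map_pow, hG, hD]

lemma alpha_mul {τ : RingAut K} {θ : K} (hτ2 : τ ^ 2 = 1) (hτθ : τ θ = θ)
    (X Y U V : Matrix (Fin n) (Fin n) K) :
      alphaTheta n θ τ X Y * alphaTheta n θ τ U V =
        alphaTheta n θ τ (X * U + θ • (Y.map ⇑τ * V)) (Y * U + X.map ⇑τ * V) := by
  have ht : ∀ a, τ (τ a) = a := fun a => by
    rw [← RingAut.mul_apply, ← pow_two, hτ2, RingAut.one_apply]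
  have hm : ∀ A B : Matrix (Fin n) (Fin n) K, (A * B).map ⇑τ = A.map ⇑τ * B.map ⇑τ :=
    fun A B => map_mul (τ : K →+* K).mapMatrix A B
  have ha : ∀ A B : Matrix (Fin n) (Fin n) K, (A + B).map ⇑τ = A.map ⇑τ + B.map ⇑τ :=
    fun A B => map_add (τ : K →+* K).mapMatrix A B
  have hs : ∀ A : Matrix (Fin n) (Fin n) K, (θ • A).map ⇑τ = θ • A.map ⇑τ :=
    fun A => by ext; simp [hτθ]
  have h2 : ∀ A : Matrix (Fin n) (Fin n) K, (A.map ⇑τ).map ⇑τ = A :=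
    fun A => by ext; simp [ht]
  simp only [alphaTheta, Matrix.fromBlocks_multiply, hm, ha, hs, h2, Matrix.smul_mul,
    Matrix.mul_smul, smul_add]
  congr 1 <;> exact add_comm _ _

end helpers

/-- under the stated assumptions on `σ, τ, γ, θ`, the set
`A = {α_θ(X,Y) : X, Y ∈ D}` is a subring of the `2n × 2n` matrix ring over `K`
(contains `0` and `1`, closed under `+`, `-`, `*`), and the multiplication rule
`α_θ(X,Y)·α_θ(U,V) = α_θ(XU + θ·τ(Y)V, YU + τ(X)V)` holds for all `X Y U V ∈ Mₙ(K)`. -/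
theorem stmt0 {K : Type} [Field K] (n : ℕ) (hn : 1 ≤ n) (σ τ : RingAut K)
    (hcomm : σ * τ = τ * σ) (hσn : σ ^ n = 1) (hτ2 : τ ^ 2 = 1)
    (γ θ : K) (hσγ : σ γ = γ) (hτγ : τ γ = γ) (hσθ : σ θ = θ) (hτθ : τ θ = θ) :
    (0 : Matrix (Fin n ⊕ Fin n) (Fin n ⊕ Fin n) K) ∈ iterCode n σ τ γ θ ∧
    (1 : Matrix (Fin n ⊕ Fin n) (Fin n ⊕ Fin n) K) ∈ iterCode n σ τ γ θ ∧
    (∀ M ∈ iterCode n σ τ γ θ, ∀ N ∈ iterCode n σ τ γ θ, M + N ∈ iterCode n σ τ γ θ) ∧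
    (∀ M ∈ iterCode n σ τ γ θ, -M ∈ iterCode n σ τ γ θ) ∧
    (∀ M ∈ iterCode n σ τ γ θ, ∀ N ∈ iterCode n σ τ γ θ, M * N ∈ iterCode n σ τ γ θ) ∧
    (∀ X Y U V : Matrix (Fin n) (Fin n) K,
      alphaTheta n θ τ X Y * alphaTheta n θ τ U V =
        alphaTheta n θ τ (X * U + θ • (Y.map ⇑τ * V)) (Y * U + X.map ⇑τ * V)) := by
  have hmul := alpha_mul (n := n) hτ2 hτθ
  refine ⟨⟨0, zero_mem' σ γ, 0, zero_mem' σ γ, ?_⟩, ⟨1, ?_, 0, zero_mem' σ γ, ?_⟩, ?_, ?_, ?_, hmul⟩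
  · simp [alphaTheta]
  · simpa [Dg_one] using mono_mem hn hσγ 0 1
  · simp [alphaTheta]
  · rintro _ ⟨X, hX, Y, hY, rfl⟩ _ ⟨U, hU, V, hV, rfl⟩
    refine ⟨X + U, add_mem' hX hU, Y + V, add_mem' hY hV, ?_⟩
    simp [alphaTheta, Matrix.fromBlocks_add, Matrix.map_add]
  · rintro _ ⟨X, hX, Y, hY, rfl⟩
    refine ⟨-X, neg_mem' hX, -Y, neg_mem' hY, ?_⟩
    have hg : ∀ A : Matrix (Fin n) (Fin n) K, (-A).map ⇑τ = -A.map ⇑τ := fun A => by ext; simp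
    simp [alphaTheta, Matrix.fromBlocks_neg, hg]
  · rintro _ ⟨X, hX, Y, hY, rfl⟩ _ ⟨U, hU, V, hV, rfl⟩
    refine ⟨_, ?_, _, ?_, hmul X Y U V⟩
    · exact add_mem' (mul_mem'' hn hσγ hσn hX hU)
        (fix_smul_mem hσθ (mul_mem'' hn hσγ hσn (map_mem' hcomm hτγ hY) hV))
    · exact add_mem' (mul_mem'' hn hσγ hσn hY hU)
        (mul_mem'' hn hσγ hσn (map_mem' hcomm hτγ hX) hV)
end
end

section
/- Let K be a field, n ≥ 1, and let σ, τ be ring automorphisms of K such that σ∘τ = τ∘σ, σⁿ = id, and τ² = id. Let γ, θ ∈ K with γ ≠ 0, σ(γ) = γ, τ(γ) = γ, σ(θ) = θ and τ(θ) = θ. Assume that every nonzero element of D is an invertible matrix, and that Z·τ(Z) ≠ θ·Iₙ for every Z ∈ D. Then for all X, Y ∈ D the determinant of α_θ(X,Y) is fixed by both σ and τ: σ(det α_θ(X,Y)) = det α_θ(X,Y) and τ(det α_θ(X,Y)) = det α_θ(X,Y). (In other words, the determinant of every codeword lies in the subfield F^⟨τ⟩ of the fixed field F of σ.) -/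
open Matrix

noncomputable section

theorem Gam_det_ne {K : Type} [Field K] (m : ℕ) (γ : K) (hγ : γ ≠ 0) :
    (Gam (m+1) γ).det ≠ 0 := by
  have h : Gam (m+1) γ = (Matrix.diagonal (fun i : Fin (m+1) => if i = 0 then γ else 1)).submatrix
      id (finRotate (m+1)) := by
    ext i j
    simp only [Gam, Matrix.of_apply, Matrix.submatrix_apply, id, Matrix.diagonal_apply,
      Fin.ext_iff, coe_finRotate, Fin.val_zero, Fin.val_last]
    have := i.2
    have := j.2
    split_ifs <;> first | rfl | omega
  rw [h, Matrix.det_permute', Matrix.det_diagonal]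
  apply mul_ne_zero
  · rcases Int.units_eq_one_or (Equiv.Perm.sign (finRotate (m+1))) with h | h <;> rw [h] <;> simp
  · rw [Finset.prod_ne_zero_iff]
    intro i _
    split_ifs <;> simp [hγ]

theorem Gam_map {K : Type} [Field K] (n : ℕ) (γ : K) (σ : RingAut K) (h : σ γ = γ) :
    (Gam n γ).map ⇑σ = Gam n γ := by
  ext i j
  simp only [Gam, Matrix.map_apply, Matrix.of_apply]
  split_ifs <;> simp [h]

theorem Gam_diag {K : Type} [Field K] (n : ℕ) (γ : K) (σ : RingAut K) (hσn : σ ^ n = 1) (c : K) :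
    Gam n γ * Matrix.diagonal (fun i : Fin n => σ ((σ ^ (i : ℕ)) c)) =
      Matrix.diagonal (fun i : Fin n => (σ ^ (i : ℕ)) c) * Gam n γ := by
  ext i j
  have hs : ∀ k : ℕ, σ ((σ ^ k) c) = (σ ^ (k+1)) c := fun k => by rw [pow_succ']; rfl
  rw [Matrix.mul_diagonal, Matrix.diagonal_mul, hs]
  simp only [Gam, Matrix.of_apply]
  split_ifs with h1 h2
  · rw [h1, mul_comm]
  · have : (j : ℕ) + 1 = n := by have := j.2; omega
    rw [this, hσn, h2.1, pow_zero, mul_comm]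
  · simp

theorem map_pow_aux {K : Type} [Field K] {n : ℕ} (σ : RingAut K) (M : Matrix (Fin n) (Fin n) K)
    (k : ℕ) : (M ^ k).map ⇑σ = (M.map ⇑σ) ^ k :=
  map_pow (RingHom.mapMatrix (σ : K →+* K)) M k

theorem map_mul_aux {K : Type} [Field K] {n : ℕ} (σ : RingAut K) (M N : Matrix (Fin n) (Fin n) K) :
    (M * N).map ⇑σ = M.map ⇑σ * N.map ⇑σ :=
  map_mul (RingHom.mapMatrix (σ : K →+* K)) M N

theorem map_sum_aux {K : Type} [Field K] {n : ℕ} (σ : RingAut K)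
    (f : Fin n → Matrix (Fin n) (Fin n) K) :
    (∑ k, f k).map ⇑σ = ∑ k, (f k).map ⇑σ :=
  map_sum (RingHom.mapMatrix (σ : K →+* K)) f _

theorem Gam_comm_s2 {K : Type} [Field K] (n : ℕ) (γ : K) (σ : RingAut K) (hσn : σ ^ n = 1)
    (h : σ γ = γ) (M : Matrix (Fin n) (Fin n) K) (hM : M ∈ cyclicRep n σ γ) :
    Gam n γ * M.map ⇑σ = M * Gam n γ := by
  obtain ⟨c, rfl⟩ := hM
  rw [map_sum_aux, Finset.mul_sum, Finset.sum_mul]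
  refine Finset.sum_congr rfl fun k _ => ?_
  rw [map_mul_aux, map_pow_aux, Gam_map n γ σ h, Matrix.diagonal_map (map_zero σ), ← mul_assoc]
  have := Gam_diag n γ σ hσn (c k)
  rw [this, mul_assoc, mul_assoc, ← pow_succ, ← pow_succ']

theorem det_theta {K : Type} [Field K] (n : ℕ) (θ : K) (A B C D : Matrix (Fin n) (Fin n) K) :
    (Matrix.fromBlocks A (θ • B) C D).det = (Matrix.fromBlocks A B (θ • C) D).det := by
  by_cases hθ : θ = 0
  · subst hθ
    simp
  · have h : Matrix.fromBlocks 1 0 0 (θ • (1 : Matrix (Fin n) (Fin n) K)) *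
        Matrix.fromBlocks A (θ • B) C D = Matrix.fromBlocks A B (θ • C) D *
        Matrix.fromBlocks 1 0 0 (θ • (1 : Matrix (Fin n) (Fin n) K)) := by
      simp [Matrix.fromBlocks_multiply]
    have h2 := congrArg Matrix.det h
    rw [Matrix.det_mul, Matrix.det_mul, mul_comm] at h2
    refine mul_right_cancel₀ ?_ h2
    simp [Matrix.det_smul, hθ]

theorem map_det_aux {K : Type} [Field K] {m : Type} [Fintype m] [DecidableEq m] (σ : RingAut K)
    (M : Matrix m m K) : σ M.det = (M.map ⇑σ).det :=
  RingHom.map_det (σ : K →+* K) M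

/-- under the stated assumptions, the determinant of every codeword
`α_θ(X,Y)`, `X, Y ∈ D`, is fixed by both `σ` and `τ` (i.e. lies in `F^⟨τ⟩`). -/
theorem stmt2 {K : Type} [Field K] (n : ℕ) (hn : 1 ≤ n) (σ τ : RingAut K)
    (hcomm : σ * τ = τ * σ) (hσn : σ ^ n = 1) (hτ2 : τ ^ 2 = 1)
    (γ θ : K) (hγ : γ ≠ 0) (hσγ : σ γ = γ) (hτγ : τ γ = γ) (hσθ : σ θ = θ) (hτθ : τ θ = θ)
    (hdiv : ∀ M ∈ cyclicRep n σ γ, M ≠ 0 → IsUnit M)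
    (hnorm : ∀ Z ∈ cyclicRep n σ γ,
      Z * Z.map ⇑τ ≠ θ • (1 : Matrix (Fin n) (Fin n) K)) :
    ∀ X ∈ cyclicRep n σ γ, ∀ Y ∈ cyclicRep n σ γ,
      σ (alphaTheta n θ τ X Y).det = (alphaTheta n θ τ X Y).det ∧
      τ (alphaTheta n θ τ X Y).det = (alphaTheta n θ τ X Y).det := by
  intro X hX Y hY
  have hcm : ∀ x, σ (τ x) = τ (σ x) := fun x => congrArg (fun f : RingAut K => f x) hcomm
  have htt : ∀ x, τ (τ x) = x := fun x => by
    have := congrArg (fun f : RingAut K => f x) hτ2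
    simpa [pow_two] using this
  constructor
  · obtain ⟨m, rfl⟩ : ∃ m, n = m + 1 := ⟨n - 1, by omega⟩
    have key : ∀ M ∈ cyclicRep (m+1) σ γ,
        Gam (m+1) γ * (M.map ⇑τ).map ⇑σ = M.map ⇑τ * Gam (m+1) γ := by
      intro M hM
      have h1 := congrArg (fun N => N.map ⇑τ) (Gam_comm_s2 (m+1) γ σ hσn hσγ M hM)
      simp only [map_mul_aux, Gam_map _ γ τ hτγ] at h1
      rw [← h1]
      congr 1
      ext i j
      simp [hcm]
    have hs : (θ • Y.map ⇑τ).map ⇑σ = θ • (Y.map ⇑τ).map ⇑σ := by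
      ext i j
      simp [hσθ]
    have h : Matrix.fromBlocks (Gam (m+1) γ) 0 0 (Gam (m+1) γ) * (alphaTheta (m+1) θ τ X Y).map ⇑σ
        = alphaTheta (m+1) θ τ X Y * Matrix.fromBlocks (Gam (m+1) γ) 0 0 (Gam (m+1) γ) := by
      simp only [alphaTheta, Matrix.fromBlocks_map, Matrix.fromBlocks_multiply, hs, zero_mul,
        mul_zero, add_zero, zero_add, Matrix.mul_smul, Matrix.smul_mul, key X hX, key Y hY,
        Gam_comm_s2 (m+1) γ σ hσn hσγ X hX, Gam_comm_s2 (m+1) γ σ hσn hσγ Y hY]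
    have h2 := congrArg Matrix.det h
    rw [Matrix.det_mul, Matrix.det_mul, mul_comm] at h2
    rw [map_det_aux]
    refine mul_right_cancel₀ ?_ h2
    rw [Matrix.det_fromBlocks_zero₂₁]
    exact mul_ne_zero (Gam_det_ne m γ hγ) (Gam_det_ne m γ hγ)
  · rw [map_det_aux]
    have h : (alphaTheta n θ τ X Y).map ⇑τ =
        (Matrix.fromBlocks X (Y.map ⇑τ) (θ • Y) (X.map ⇑τ)).submatrix
          (Equiv.sumComm (Fin n) (Fin n)) (Equiv.sumComm (Fin n) (Fin n)) := by
      ext i j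
      rcases i with i | i <;> rcases j with j | j <;> simp [alphaTheta, htt, hτθ]
    rw [h, Matrix.det_submatrix_equiv_self, alphaTheta, det_theta]
end
end

section
/- Let K be a field, n ≥ 1, and let σ, τ be ring automorphisms of K such that σ∘τ = τ∘σ, σⁿ = id, and τ² = id. Let γ, θ ∈ K satisfy σ(γ) = γ, τ(γ) = γ, σ(θ) = θ and τ(θ) = θ. Assume that every nonzero element of D is an invertible matrix. Then the following are equivalent: (i) every nonzero element M of A has a two-sided inverse inside A, i.e., there exists N ∈ A with M·N = N·M = I (A is a division algebra); (ii) for every Z ∈ D, Z·τ(Z) ≠ θ·Iₙ. -/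
open Matrix

noncomputable section

namespace IterAux

variable {K : Type} [Field K] {n : ℕ}

def Del (n : ℕ) (σ : RingAut K) (a : K) : Matrix (Fin n) (Fin n) K :=
  Matrix.diagonal (fun i : Fin n => (σ ^ (i : ℕ)) a)

lemma mul_Gam (γ : K) (M : Matrix (Fin n) (Fin n) K) (i j : Fin n) :
    (M * Gam n γ) i j = if h : (j : ℕ) + 1 < n then M i ⟨j + 1, h⟩
      else M i ⟨0, i.pos⟩ * γ := by
  rw [Matrix.mul_apply]
  split_ifs with h
  · rw [Finset.sum_eq_single ⟨j + 1, h⟩]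
    · simp [Gam]
    · intro m _ hm
      have h1 : ¬ ((m : ℕ) = j + 1) := fun h' => hm (Fin.ext h')
      have h2 : ¬ ((j : ℕ) = n - 1) := by omega
      simp [Gam, h1, h2]
    · simp
  · rw [Finset.sum_eq_single ⟨0, i.pos⟩]
    · have h2 : ((j : ℕ) = n - 1) := by omega
      simp [Gam, h2]
    · intro m _ hm
      have h1 : ¬ ((m : ℕ) = j + 1) := by have := m.2; omega
      have h2 : ¬ ((m : ℕ) = 0) := fun h' => hm (Fin.ext h')
      simp [Gam, h1, h2]
    · simp

lemma Gam_pow (γ : K) (k : ℕ) (hk : k ≤ n) (i j : Fin n) :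
    (Gam n γ ^ k) i j = if (i : ℕ) = j + k then 1 else if (i : ℕ) + n = j + k then γ else 0 := by
  induction k generalizing i j with
  | zero =>
    have := i.2
    have := j.2
    have h2 : ¬ ((i : ℕ) + n = j) := by omega
    simp [Matrix.one_apply, Fin.ext_iff, h2]
  | succ k ih =>
    have := i.2
    have := j.2
    rw [pow_succ, mul_Gam]
    split_ifs with h h1 h2 h1 h2
    all_goals rw [ih (by omega)]
    all_goals simp only []
    · rw [if_pos (by omega)]
    · rw [if_neg (by omega), if_pos (by omega)]
    · rw [if_neg (by omega), if_neg (by omega)]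
    · omega
    · rw [if_pos (by omega), one_mul]
    · rw [if_neg (by omega), if_neg (by omega), zero_mul]

lemma Gam_pow_n (σ : RingAut K) (γ : K) (hσγ : σ γ = γ) : Gam n γ ^ n = Del n σ γ := by
  ext i j
  have hs : ∀ k : ℕ, (σ ^ k) γ = γ := by
    intro k
    induction k with
    | zero => rfl
    | succ k ih => rw [pow_succ, RingAut.mul_apply, hσγ, ih]
  have := i.2
  have := j.2
  rw [Gam_pow γ n le_rfl, if_neg (by omega)]
  simp [Del, Matrix.diagonal_apply, Fin.ext_iff, hs]

lemma Del_mul (σ : RingAut K) (a b : K) : Del n σ a * Del n σ b = Del n σ (a * b) := by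
  simp [Del]

lemma Del_add (σ : RingAut K) (a b : K) : Del n σ a + Del n σ b = Del n σ (a + b) := by
  simp [Del]

lemma Del_one (σ : RingAut K) : Del n σ 1 = 1 := by
  simp [Del]

lemma Del_fix (σ : RingAut K) (γ : K) (hσγ : σ γ = γ) : Del n σ γ = γ • 1 := by
  have hs : ∀ k : ℕ, (σ ^ k) γ = γ := by
    intro k
    induction k with
    | zero => rfl
    | succ k ih => rw [pow_succ, RingAut.mul_apply, hσγ, ih]
  ext i j
  simp [Del, Matrix.diagonal_apply, Matrix.one_apply, hs]

lemma Gam_Del (σ : RingAut K) (hσn : σ ^ n = 1) (γ a : K) :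
    Gam n γ * Del n σ (σ a) = Del n σ a * Gam n γ := by
  ext i j
  simp only [Del, Matrix.mul_diagonal, Matrix.diagonal_mul]
  have e : (σ ^ (j : ℕ)) (σ a) = (σ ^ ((j : ℕ) + 1)) a := by
    rw [pow_succ, RingAut.mul_apply]
  rw [e]
  by_cases h : (i : ℕ) = j + 1
  · simp [Gam, h]
  · by_cases h2 : (i : ℕ) = 0 ∧ (j : ℕ) = n - 1
    · have h3 : (j : ℕ) + 1 = n := by have := j.2; omega
      rw [h3, hσn, h2.1]
      simp [mul_comm]
    · simp [Gam, h, h2]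

lemma Gam_pow_Del (σ : RingAut K) (hσn : σ ^ n = 1) (γ : K) (k : ℕ) (a : K) :
    ∃ b, Gam n γ ^ k * Del n σ a = Del n σ b * Gam n γ ^ k := by
  induction k generalizing a with
  | zero => exact ⟨a, by simp⟩
  | succ k ih =>
    obtain ⟨b, hb⟩ := ih (σ.symm a)
    refine ⟨b, ?_⟩
    have : a = σ (σ.symm a) := by simp
    rw [pow_succ, mul_assoc]
    conv_lhs => rw [this]
    rw [Gam_Del σ hσn, ← mul_assoc, hb, mul_assoc]

def Phi (n : ℕ) (σ : RingAut K) (γ : K) (c : Fin n → K) : Matrix (Fin n) (Fin n) K :=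
  ∑ k : Fin n, Del n σ (c k) * Gam n γ ^ (k : ℕ)

lemma mem_iff (σ : RingAut K) (γ : K) (M : Matrix (Fin n) (Fin n) K) :
    M ∈ cyclicRep n σ γ ↔ ∃ c, M = Phi n σ γ c := Iff.rfl

lemma Phi_add (σ : RingAut K) (γ : K) (c d : Fin n → K) :
    Phi n σ γ (c + d) = Phi n σ γ c + Phi n σ γ d := by
  simp [Phi, ← Finset.sum_add_distrib, ← add_mul, Del_add]

lemma Phi_smul (σ : RingAut K) (γ : K) (a : K) (c : Fin n → K) :
    Phi n σ γ (a • c) = Del n σ a * Phi n σ γ c := by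
  simp [Phi, Finset.mul_sum, ← mul_assoc, Del_mul]

lemma Phi_inj (σ : RingAut K) (γ : K) (c d : Fin n → K)
    (h : Phi n σ γ c = Phi n σ γ d) : c = d := by
  have key : ∀ (c : Fin n → K) (i : Fin n),
      Phi n σ γ c i ⟨0, i.pos⟩ = (σ ^ (i : ℕ)) (c i) := by
    intro c i
    rw [Phi, Matrix.sum_apply, Finset.sum_eq_single i]
    · rw [Del, Matrix.diagonal_mul, Gam_pow γ _ i.2.le]; simp
    · intro b _ hb
      have h1 : ¬ ((i : ℕ) = b) := fun h => hb (Fin.ext h.symm)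
      have h2 : ¬ ((i : ℕ) + n = b) := by have := b.2; omega
      rw [Del, Matrix.diagonal_mul, Gam_pow γ _ b.2.le]; simp [h1, h2]
    · simp
  funext i
  have := key c i
  rw [h, key d i] at this
  exact ((σ ^ (i : ℕ)).injective this).symm

lemma D_add {σ : RingAut K} {γ : K} {M N : Matrix (Fin n) (Fin n) K}
    (hM : M ∈ cyclicRep n σ γ) (hN : N ∈ cyclicRep n σ γ) : M + N ∈ cyclicRep n σ γ := by
  obtain ⟨c, rfl⟩ := (mem_iff ..).1 hM
  obtain ⟨d, rfl⟩ := (mem_iff ..).1 hN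
  exact (mem_iff ..).2 ⟨c + d, (Phi_add ..).symm⟩

lemma D_zero (σ : RingAut K) (γ : K) : (0 : Matrix (Fin n) (Fin n) K) ∈ cyclicRep n σ γ :=
  (mem_iff ..).2 ⟨0, by simp [Phi, Del]⟩

lemma D_sum {σ : RingAut K} {γ : K} {ι : Type} (s : Finset ι)
    (f : ι → Matrix (Fin n) (Fin n) K)
    (h : ∀ i ∈ s, f i ∈ cyclicRep n σ γ) : ∑ i ∈ s, f i ∈ cyclicRep n σ γ :=
  Finset.sum_induction f (· ∈ cyclicRep n σ γ) (fun _ _ => D_add) (D_zero σ γ) h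

lemma D_mono (σ : RingAut K) (hn : 1 ≤ n) (hσn : σ ^ n = 1) (γ : K) (hσγ : σ γ = γ)
    (k : ℕ) (a : K) : Del n σ a * Gam n γ ^ k ∈ cyclicRep n σ γ := by
  induction k using Nat.strong_induction_on generalizing a with
  | _ k ih =>
    by_cases hk : k < n
    · refine (mem_iff ..).2 ⟨Pi.single ⟨k, hk⟩ a, ?_⟩
      rw [Phi, Finset.sum_eq_single ⟨k, hk⟩]
      · simp
      · intro b _ hb
        simp [hb, Del]
      · simp
    · have : k = n + (k - n) := by omega
      rw [this, pow_add, Gam_pow_n σ γ hσγ, ← mul_assoc, Del_mul]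
      exact ih _ (by omega) _

lemma D_mul {σ : RingAut K} (hn : 1 ≤ n) (hσn : σ ^ n = 1) {γ : K} (hσγ : σ γ = γ)
    {M N : Matrix (Fin n) (Fin n) K}
    (hM : M ∈ cyclicRep n σ γ) (hN : N ∈ cyclicRep n σ γ) : M * N ∈ cyclicRep n σ γ := by
  obtain ⟨c, rfl⟩ := (mem_iff ..).1 hM
  obtain ⟨d, rfl⟩ := (mem_iff ..).1 hN
  rw [Phi, Phi, Finset.sum_mul_sum]
  refine D_sum _ _ fun i _ => D_sum _ _ fun j _ => ?_
  obtain ⟨b, hb⟩ := Gam_pow_Del σ hσn γ i (d j)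
  have : Del n σ (c i) * Gam n γ ^ (i : ℕ) * (Del n σ (d j) * Gam n γ ^ (j : ℕ))
      = Del n σ (c i * b) * Gam n γ ^ ((i : ℕ) + j) := by
    rw [pow_add, ← Del_mul]
    calc _ = Del n σ (c i) * (Gam n γ ^ (i : ℕ) * Del n σ (d j)) * Gam n γ ^ (j : ℕ) := by
          simp only [mul_assoc]
      _ = _ := by rw [hb]; simp only [mul_assoc]
  rw [this]
  exact D_mono σ hn hσn γ hσγ _ _

lemma D_Del {σ : RingAut K} (hn : 1 ≤ n) (hσn : σ ^ n = 1) {γ : K} (hσγ : σ γ = γ) (a : K) :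
    Del n σ a ∈ cyclicRep n σ γ := by
  simpa using D_mono σ hn hσn γ hσγ 0 a

lemma D_inv {σ : RingAut K} (hn : 1 ≤ n) (hσn : σ ^ n = 1) {γ : K} (hσγ : σ γ = γ)
    {X : Matrix (Fin n) (Fin n) K} (hX : X ∈ cyclicRep n σ γ) (hu : IsUnit X) :
    ∃ N ∈ cyclicRep n σ γ, N * X = 1 ∧ X * N = 1 := by
  have h : ∀ c, ∃ d, Phi n σ γ c * X = Phi n σ γ d := fun c =>
    (mem_iff ..).1 (D_mul hn hσn hσγ ((mem_iff ..).2 ⟨c, rfl⟩) hX)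
  choose T hT using h
  let L : (Fin n → K) →ₗ[K] (Fin n → K) :=
    { toFun := T
      map_add' := fun c d => Phi_inj σ γ _ _ (by
        rw [← hT, Phi_add, Phi_add, ← hT, ← hT, add_mul])
      map_smul' := fun a c => Phi_inj σ γ _ _ (by
        rw [← hT, RingHom.id_apply, Phi_smul, Phi_smul, ← hT, mul_assoc]) }
  have hinj : Function.Injective L := by
    intro c d hcd
    have hcd' : T c = T d := hcd
    apply Phi_inj σ γ
    apply hu.mul_left_injective
    change _ * X = _ * X
    rw [hT, hT, hcd']
  have hsurj := LinearMap.injective_iff_surjective.1 hinj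
  obtain ⟨e, he⟩ := (mem_iff ..).1 (D_Del hn hσn hσγ (1 : K))
  obtain ⟨c, hc⟩ := hsurj e
  have hc' : T c = e := hc
  have h1 : Phi n σ γ c * X = 1 := by rw [hT, hc', ← he, Del_one]
  exact ⟨Phi n σ γ c, (mem_iff ..).2 ⟨c, rfl⟩, h1, mul_eq_one_comm.1 h1⟩

lemma map_eq (τ : RingAut K) (M : Matrix (Fin n) (Fin n) K) :
    M.map ⇑τ = (τ : K →+* K).mapMatrix M := rfl

lemma D_map {σ τ : RingAut K} (hcomm : σ * τ = τ * σ) {γ : K} (hτγ : τ γ = γ)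
    {X : Matrix (Fin n) (Fin n) K} (hX : X ∈ cyclicRep n σ γ) :
    X.map ⇑τ ∈ cyclicRep n σ γ := by
  obtain ⟨c, rfl⟩ := (mem_iff ..).1 hX
  refine (mem_iff ..).2 ⟨fun i => τ (c i), ?_⟩
  rw [map_eq, Phi, Phi, map_sum]
  refine Finset.sum_congr rfl fun k _ => ?_
  rw [map_mul, map_pow]
  congr 1
  · ext i j
    have hc : (σ ^ (i : ℕ)) * τ = τ * σ ^ (i : ℕ) :=
      Commute.pow_left (show Commute σ τ from hcomm) i
    have hc' : ∀ x, (σ ^ (i : ℕ)) (τ x) = τ ((σ ^ (i : ℕ)) x) := fun x => by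
      rw [← RingAut.mul_apply, hc, RingAut.mul_apply]
    by_cases hij : i = j
    · subst hij
      simpa [Del] using (hc' (c k)).symm
    · simp [Del, Matrix.diagonal_apply, hij]
  · congr 1
    ext i j
    simp only [Gam, RingHom.mapMatrix_apply, Matrix.map_apply, Matrix.of_apply]
    split_ifs <;> simp [hτγ]

lemma map_map_two {τ : RingAut K} (hτ2 : τ ^ 2 = 1) (M : Matrix (Fin n) (Fin n) K) :
    (M.map ⇑τ).map ⇑τ = M := by
  ext i j
  simp only [Matrix.map_apply]
  rw [← RingAut.mul_apply, ← pow_two, hτ2, RingAut.one_apply]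

lemma map_smul_fix {τ : RingAut K} {θ : K} (hτθ : τ θ = θ) (M : Matrix (Fin n) (Fin n) K) :
    (θ • M).map ⇑τ = θ • M.map ⇑τ := by
  ext i j
  simp [hτθ]

lemma map_mul' (τ : RingAut K) (M N : Matrix (Fin n) (Fin n) K) :
    (M * N).map ⇑τ = M.map ⇑τ * N.map ⇑τ := by
  simp only [map_eq, map_mul]

lemma map_add' (τ : RingAut K) (M N : Matrix (Fin n) (Fin n) K) :
    (M + N).map ⇑τ = M.map ⇑τ + N.map ⇑τ := by
  simp only [map_eq, map_add]

lemma alpha_mul {τ : RingAut K} (hτ2 : τ ^ 2 = 1) {θ : K} (hτθ : τ θ = θ)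
    (X Y U V : Matrix (Fin n) (Fin n) K) :
    alphaTheta n θ τ X Y * alphaTheta n θ τ U V =
      alphaTheta n θ τ (X * U + θ • (Y.map ⇑τ * V)) (Y * U + X.map ⇑τ * V) := by
  simp only [alphaTheta, Matrix.fromBlocks_multiply, map_add', map_mul', map_smul_fix hτθ,
    map_map_two hτ2]
  congr 1
  · simp
  · simp only [Matrix.mul_smul, Matrix.smul_mul, ← smul_add]
    rw [add_comm]
  · simp only [Matrix.mul_smul]
    rw [add_comm]

lemma alpha_one (τ : RingAut K) (θ : K) :
    alphaTheta n θ τ 1 0 = 1 := by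
  have h0 : (0 : Matrix (Fin n) (Fin n) K).map ⇑τ = 0 := by rw [map_eq, map_zero]
  have h1 : (1 : Matrix (Fin n) (Fin n) K).map ⇑τ = 1 := by rw [map_eq, map_one]
  rw [alphaTheta, h0, h1, smul_zero, Matrix.fromBlocks_one]

end IterAux

/-- assuming the cyclic algebra is division, the following are equivalent:
(i) every nonzero element `M` of `A` has a two-sided inverse inside `A`
(`A` is a division algebra); (ii) `Z·τ(Z) ≠ θ·Iₙ` for every `Z ∈ D`. -/
theorem stmt3 {K : Type} [Field K] (n : ℕ) (hn : 1 ≤ n) (σ τ : RingAut K)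
    (hcomm : σ * τ = τ * σ) (hσn : σ ^ n = 1) (hτ2 : τ ^ 2 = 1)
    (γ θ : K) (hσγ : σ γ = γ) (hτγ : τ γ = γ) (hσθ : σ θ = θ) (hτθ : τ θ = θ)
    (hdiv : ∀ M ∈ cyclicRep n σ γ, M ≠ 0 → IsUnit M) :
    (∀ M ∈ iterCode n σ τ γ θ, M ≠ 0 →
        ∃ N ∈ iterCode n σ τ γ θ, M * N = 1 ∧ N * M = 1) ↔
      (∀ Z ∈ cyclicRep n σ γ,
        Z * Z.map ⇑τ ≠ θ • (1 : Matrix (Fin n) (Fin n) K)) := by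
  have h1D : (1 : Matrix (Fin n) (Fin n) K) ∈ cyclicRep n σ γ := by
    have := IterAux.D_Del hn hσn hσγ (1 : K)
    rwa [IterAux.Del_one] at this
  have hm0 : (0 : Matrix (Fin n) (Fin n) K).map ⇑τ = 0 := by rw [IterAux.map_eq, map_zero]
  have hm1 : (1 : Matrix (Fin n) (Fin n) K).map ⇑τ = 1 := by rw [IterAux.map_eq, map_one]
  have hsm : ∀ a : K, σ a = a → ∀ M ∈ cyclicRep n σ γ, a • M ∈ cyclicRep n σ γ := by
    intro a ha M hM
    have := IterAux.D_mul hn hσn hσγ (IterAux.D_Del hn hσn hσγ a) hM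
    rwa [IterAux.Del_fix σ a ha, Matrix.smul_mul, one_mul] at this
  have hneg : ∀ M ∈ cyclicRep n σ γ, -M ∈ cyclicRep n σ γ := by
    intro M hM
    have := hsm (-1) (by simp) M hM
    rwa [neg_one_smul] at this
  constructor
  · intro H Z hZ hZθ
    have hne : alphaTheta n θ τ Z 1 ≠ 0 := by
      intro h
      have := congrFun (congrFun h (Sum.inr ⟨0, hn⟩)) (Sum.inl ⟨0, hn⟩)
      simp [alphaTheta] at this
    obtain ⟨N, -, -, hN⟩ := H _ ⟨Z, hZ, 1, h1D, rfl⟩ hne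
    have hz : alphaTheta n θ τ Z 1 * Matrix.fromBlocks (-(Z.map ⇑τ)) 0 1 0 = 0 := by
      rw [alphaTheta, Matrix.fromBlocks_multiply, hm1]
      simp [hZθ]
    have h2 : Matrix.fromBlocks (-(Z.map ⇑τ)) 0 1 0 = (0 : Matrix (Fin n ⊕ Fin n) (Fin n ⊕ Fin n) K) := by
      rw [← one_mul (Matrix.fromBlocks (-(Z.map ⇑τ)) 0 1 0), ← hN, mul_assoc, hz, mul_zero]
    have := congrFun (congrFun h2 (Sum.inr ⟨0, hn⟩)) (Sum.inl ⟨0, hn⟩)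
    simp at this
  · rintro H M ⟨X, hX, Y, hY, rfl⟩ hne
    suffices h : ∃ U ∈ cyclicRep n σ γ, ∃ V ∈ cyclicRep n σ γ,
        X * U + θ • (Y.map ⇑τ * V) = 1 ∧ Y * U + X.map ⇑τ * V = 0 by
      obtain ⟨U, hU, V, hV, e1, e2⟩ := h
      have hr : alphaTheta n θ τ X Y * alphaTheta n θ τ U V = 1 := by
        rw [IterAux.alpha_mul hτ2 hτθ, e1, e2, IterAux.alpha_one]
      exact ⟨_, ⟨U, hU, V, hV, rfl⟩, hr, mul_eq_one_comm.1 hr⟩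
    by_cases hY0 : Y = 0
    · subst hY0
      have hX0 : X ≠ 0 := by
        rintro rfl
        apply hne
        rw [alphaTheta, hm0, smul_zero, Matrix.fromBlocks_zero]
      obtain ⟨U, hU, -, hXU⟩ := IterAux.D_inv hn hσn hσγ hX (hdiv X hX hX0)
      exact ⟨U, hU, 0, IterAux.D_zero σ γ, by simp [hXU], by simp⟩
    · obtain ⟨J, hJ, hJY, hYJ⟩ := IterAux.D_inv hn hσn hσγ hY (hdiv Y hY hY0)
      have hXJ := IterAux.D_mul hn hσn hσγ hX hJ
      have htX := IterAux.D_map hcomm hτγ hX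
      have htY := IterAux.D_map hcomm hτγ hY
      have hW : θ • Y.map ⇑τ + -(X * J * X.map ⇑τ) ∈ cyclicRep n σ γ :=
        IterAux.D_add (hsm θ hσθ _ htY) (hneg _ (IterAux.D_mul hn hσn hσγ hXJ htX))
      have hW0 : θ • Y.map ⇑τ + -(X * J * X.map ⇑τ) ≠ 0 := by
        intro h0
        apply H (X * J) hXJ
        have h3 : X * J * X.map ⇑τ = θ • Y.map ⇑τ := (add_neg_eq_zero.1 h0).symm
        rw [IterAux.map_mul', ← mul_assoc, h3, Matrix.smul_mul, ← IterAux.map_mul', hYJ, hm1]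
      obtain ⟨V, hV, -, hWV⟩ := IterAux.D_inv hn hσn hσγ hW (hdiv _ hW hW0)
      refine ⟨-(J * (X.map ⇑τ * V)), hneg _ (IterAux.D_mul hn hσn hσγ hJ
        (IterAux.D_mul hn hσn hσγ htX hV)), V, hV, ?_, ?_⟩
      · rw [← hWV, add_mul, Matrix.smul_mul, mul_neg, neg_mul, add_comm]
        simp only [mul_assoc]
      · rw [mul_neg, ← mul_assoc, hYJ, one_mul, neg_add_cancel]
end
end

section
/- Let g be a ring automorphism of ℂ that commutes with complex conjugation, and for a complex matrix M let g(M) denote entrywise application. Let θ' be a positive real number, s = √θ', and ζ ∈ ℂ with ζ⁴ = 1. For D ∈ M_n(ℂ) define the 2n×2n matrices B(D) = [[D, 0],[0, g(D)]] and C(D) = [[0, ζ·s·g(D)],[s·D, 0]]. If D_j, D_k ∈ M_n(ℂ) satisfy D_j·D_k* + D_k·D_j* = 0, where * denotes conjugate transpose, then B(D_j)·B(D_k)* + B(D_k)·B(D_j)* = 0 and C(D_j)·C(D_k)* + C(D_k)·C(D_j)* = 0. (Thus the iterated code inherits the orthogonality relations, hence the fast-decodability properties, of the underlying code.) -/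
open Matrix

noncomputable section

/-- if `g` is a ring automorphism of `ℂ` commuting with complex conjugation,
`θ' > 0`, `s = √θ'`, `ζ⁴ = 1`, and `Dⱼ·Dₖ* + Dₖ·Dⱼ* = 0`, then the block matrices
`B(D) = [[D, 0], [0, g(D)]]` and `C(D) = [[0, ζ·s·g(D)], [s·D, 0]]` satisfy the same
orthogonality relations: `B(Dⱼ)·B(Dₖ)* + B(Dₖ)·B(Dⱼ)* = 0` and
`C(Dⱼ)·C(Dₖ)* + C(Dₖ)·C(Dⱼ)* = 0`. Thus the iterated code inherits the orthogonality
relations (hence the fast-decodability properties) of the underlying code. -/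
theorem stmt6 (n : ℕ) (g : RingAut ℂ)
    (hg : ∀ z : ℂ, g (starRingEnd ℂ z) = starRingEnd ℂ (g z))
    (θ' : ℝ) (hθ' : 0 < θ') (s : ℝ) (hs : s = Real.sqrt θ')
    (ζ : ℂ) (hζ : ζ ^ 4 = 1)
    (B C : Matrix (Fin n) (Fin n) ℂ → Matrix (Fin n ⊕ Fin n) (Fin n ⊕ Fin n) ℂ)
    (hB : ∀ D : Matrix (Fin n) (Fin n) ℂ, B D = Matrix.fromBlocks D 0 0 (D.map ⇑g))
    (hC : ∀ D : Matrix (Fin n) (Fin n) ℂ,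
      C D = Matrix.fromBlocks 0 ((ζ * (s : ℂ)) • D.map ⇑g) (((s : ℂ)) • D) 0)
    (Dj Dk : Matrix (Fin n) (Fin n) ℂ)
    (hD : Dj * Dkᴴ + Dk * Djᴴ = 0) :
    B Dj * (B Dk)ᴴ + B Dk * (B Dj)ᴴ = 0 ∧
    C Dj * (C Dk)ᴴ + C Dk * (C Dj)ᴴ = 0 := by
  have hct : ∀ D : Matrix (Fin n) (Fin n) ℂ, (D.map ⇑g)ᴴ = Dᴴ.map ⇑g := by
    intro D
    ext i j
    exact (hg (D j i)).symm
  have hmul : ∀ X Y : Matrix (Fin n) (Fin n) ℂ,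
      X.map ⇑g * Y.map ⇑g = (X * Y).map ⇑g := by
    intro X Y
    ext i j
    simp [Matrix.mul_apply, map_sum, map_mul]
  have hG : Dj.map ⇑g * (Dk.map ⇑g)ᴴ + Dk.map ⇑g * (Dj.map ⇑g)ᴴ = 0 := by
    rw [hct, hct, hmul, hmul]
    ext i j
    have h := congrFun (congrFun hD i) j
    simp only [Matrix.add_apply, Matrix.zero_apply, Matrix.map_apply] at h ⊢
    rw [← map_add, h, map_zero]
  constructor
  · rw [hB, hB, fromBlocks_conjTranspose, fromBlocks_conjTranspose, fromBlocks_multiply,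
      fromBlocks_multiply, fromBlocks_add]
    simp only [conjTranspose_zero, Matrix.mul_zero, Matrix.zero_mul, add_zero, zero_add, hD, hG,
      fromBlocks_zero]
  · rw [hC, hC, fromBlocks_conjTranspose, fromBlocks_conjTranspose, fromBlocks_multiply,
      fromBlocks_multiply, fromBlocks_add]
    simp only [conjTranspose_zero, Matrix.mul_zero, Matrix.zero_mul, add_zero, zero_add,
      conjTranspose_smul, Matrix.smul_mul, Matrix.mul_smul, ← smul_add, hD, hG, smul_zero,
      fromBlocks_zero]
end
end

section
/- Let F be a field of characteristic different from 2, let a ∈ F not be a square in F, and let γ, θ ∈ F with γ ≠ 0. Then the following are equivalent: (i) for every z ∈ ℍ[F,a,γ], z·σ(z) ≠ θ; (ii) both of the following hold: (1) for all u₀, u₁, v₁ ∈ F, θ ≠ u₀² − a·u₁² + γ·a·v₁², and (2) for all w₀, w₁ ∈ F with w₀·w₁ = 0, θ ≠ γ·(w₀² + a·w₁²). (Condition (1) says θ is not a determinant det[[u, γσ(v)],[v, σ(u)]] with u ∈ K = F(√a) and v ∈ √a·F; condition (2) says θ ≢ γ modulo squares of K^×.) -/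
open Quaternion

noncomputable section

/-- The automorphism `σ` of the quaternion algebra `ℍ[F, a, γ]` given by
`σ(x₀ + x₁i + x₂j + x₃k) = x₀ − x₁i + x₂j − x₃k` (the extension to the quaternions of the
nontrivial automorphism of the maximal subfield `K = F(√a) = F ⊕ Fi`). -/
def qsigma {F : Type} [Field F] (a γ : F) (z : ℍ[F, a, γ]) : ℍ[F, a, γ] :=
  ⟨z.re, -z.imI, z.imJ, -z.imK⟩

/-- for `F` of characteristic `≠ 2`, `a` a non-square, `γ ≠ 0`:
`θ ≠ z·σ(z)` for all quaternions `z` iff (1) `θ` is not a determinant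
`u₀² − a·u₁² + γ·a·v₁²` and (2) `θ ≢ γ` modulo squares of `K^×`, i.e.
`θ ≠ γ·(w₀² + a·w₁²)` whenever `w₀·w₁ = 0`. -/
theorem stmt7 {F : Type} [Field F] (hchar : (2 : F) ≠ 0)
    (a : F) (ha : ¬ IsSquare a) (γ θ : F) (hγ : γ ≠ 0) :
    (∀ z : ℍ[F, a, γ], z * qsigma a γ z ≠ (θ : ℍ[F, a, γ])) ↔
      ((∀ u₀ u₁ v₁ : F, θ ≠ u₀ ^ 2 - a * u₁ ^ 2 + γ * a * v₁ ^ 2) ∧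
        (∀ w₀ w₁ : F, w₀ * w₁ = 0 → θ ≠ γ * (w₀ ^ 2 + a * w₁ ^ 2))) := by
  have key : ∀ z : ℍ[F, a, γ], z * qsigma a γ z = (θ : ℍ[F, a, γ]) ↔
      (z.re ^ 2 - a * z.imI ^ 2 + γ * z.imJ ^ 2 + γ * a * z.imK ^ 2 = θ ∧
        2 * γ * (z.imJ * z.imK) = 0 ∧ 2 * (z.re * z.imJ) = 0 ∧ 2 * (z.imI * z.imJ) = 0) := by
    intro z
    rw [QuaternionAlgebra.ext_iff]
    simp only [QuaternionAlgebra.re_mul, QuaternionAlgebra.imI_mul, QuaternionAlgebra.imJ_mul,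
      QuaternionAlgebra.imK_mul, qsigma, QuaternionAlgebra.re_coe, QuaternionAlgebra.imI_coe,
      QuaternionAlgebra.imJ_coe, QuaternionAlgebra.imK_coe]
    refine and_congr ?_ (and_congr ?_ (and_congr ?_ ?_)) <;>
      constructor <;> intro h <;> linear_combination h
  constructor
  · intro h
    have h1 : ∀ u₀ u₁ v₁ : F, θ ≠ u₀ ^ 2 - a * u₁ ^ 2 + γ * a * v₁ ^ 2 := by
      intro u₀ u₁ v₁ e
      refine h ⟨u₀, u₁, 0, v₁⟩ ((key _).2 ⟨?_, ?_, ?_, ?_⟩)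
      · simp [e]
      all_goals simp
    refine ⟨h1, ?_⟩
    intro w₀ w₁ hw e
    rcases mul_eq_zero.1 hw with h0 | h0
    · subst h0
      exact h1 0 0 w₁ (by rw [e]; ring)
    · subst h0
      refine h ⟨0, 0, w₀, 0⟩ ((key _).2 ⟨?_, ?_, ?_, ?_⟩)
      · simp [e]
      all_goals simp
  · rintro ⟨h1, h2⟩ z hz
    obtain ⟨e, ei, ej, ek⟩ := (key z).1 hz
    by_cases hJ : z.imJ = 0
    · exact h1 z.re z.imI z.imK (by rw [← e, hJ]; ring)
    · have e3 : z.imK = 0 := by simpa [hchar, hγ, hJ] using ei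
      have e0 : z.re = 0 := by simpa [hchar, hJ] using ej
      have e1 : z.imI = 0 := by simpa [hchar, hJ] using ek
      exact h2 z.imJ 0 (by simp) (by rw [← e, e0, e1, e3]; ring)
end
end

section
/- Let F be a linearly ordered field (for instance a totally real number field with a fixed real embedding), and let a, γ, θ ∈ F with a < 0, γ < 0 and θ < 0. Suppose furthermore that for all w₀, w₁ ∈ F with w₀·w₁ = 0 one has θ ≠ γ·(w₀² + a·w₁²) (i.e., θ ≢ γ modulo squares of K^× for K = F(√a)). Then for every z ∈ ℍ[F,a,γ], z·σ(z) ≠ θ; consequently every nonzero element of the iterated code α_θ(Q,Q) has nonzero determinant. -/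
open Quaternion

noncomputable section

/-- over a linearly ordered field `F` with `a < 0`, `γ < 0`, `θ < 0` and
`θ ≢ γ` modulo squares of `K^×` (encoded by: `θ ≠ γ·(w₀² + a·w₁²)` whenever `w₀·w₁ = 0`),
one has `z·σ(z) ≠ θ` for every quaternion `z ∈ ℍ[F, a, γ]`; consequently every nonzero
element of the iterated code `α_θ(Q, Q)` has nonzero determinant. -/
theorem stmt8 {F : Type} [Field F] [LinearOrder F] [IsStrictOrderedRing F] (a γ θ : F)
    (ha : a < 0) (hγ : γ < 0) (hθ : θ < 0)
    (h2 : ∀ w₀ w₁ : F, w₀ * w₁ = 0 → θ ≠ γ * (w₀ ^ 2 + a * w₁ ^ 2)) :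
    ∀ z : ℍ[F, a, γ], z * qsigma a γ z ≠ (θ : ℍ[F, a, γ]) := by
  intro z hz
  obtain ⟨x0, x1, x2, x3⟩ := z
  have h0 := congrArg QuaternionAlgebra.re hz
  have hI := congrArg QuaternionAlgebra.imI hz
  have hJ := congrArg QuaternionAlgebra.imJ hz
  have hK := congrArg QuaternionAlgebra.imK hz
  simp [qsigma] at h0 hI hJ hK
  by_cases hx : x2 = 0
  · subst hx
    have e1 : 0 ≤ x0 ^ 2 := sq_nonneg _
    have e2 : 0 ≤ -a * x1 ^ 2 := mul_nonneg (by linarith) (sq_nonneg _)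
    have e3 : 0 ≤ a * γ * x3 ^ 2 :=
      mul_nonneg (mul_pos_of_neg_of_neg ha hγ).le (sq_nonneg _)
    have e4 : θ = x0 ^ 2 + -a * x1 ^ 2 + a * γ * x3 ^ 2 := by rw [← h0]; ring
    linarith
  · have k0 : x0 = 0 := by
      have : 2 * x2 * x0 = 0 := by linear_combination hJ
      simpa [hx] using this
    have k1 : x1 = 0 := by
      have : 2 * x2 * x1 = 0 := by linear_combination hK
      simpa [hx] using this
    have k3 : x3 = 0 := by
      have : 2 * γ * x2 * x3 = 0 := by linear_combination hI
      simpa [hx, hγ.ne] using this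
    subst k0 k1 k3
    exact h2 x2 0 (by simp) (by linear_combination -h0)
end
end

section
/- Let F be a field of characteristic different from 2, let a ∈ F not be a square in F, and let γ, θ ∈ F with γ ≠ 0. Suppose (i) the quadratic form ⟨1, −a, γa, −θ⟩ is anisotropic over F, i.e., for all x, y, z, w ∈ F, x² − a·y² + γ·a·z² − θ·w² = 0 implies x = y = z = w = 0; and (ii) the quadratic form ⟨γ, −θ⟩ is anisotropic over K = F(√a), i.e., for all x₀, x₁, y₀, y₁ ∈ F, if γ·(x₀² + a·x₁²) = θ·(y₀² + a·y₁²) and γ·x₀·x₁ = θ·y₀·y₁, then x₀ = x₁ = y₀ = y₁ = 0. Then for every z ∈ ℍ[F,a,γ], z·σ(z) ≠ θ. -/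
open Quaternion

noncomputable section

/-- for `F` of characteristic `≠ 2`, `a` a non-square, `γ ≠ 0`, if the
quadratic form `⟨1, −a, γa, −θ⟩` is anisotropic over `F` and `⟨γ, −θ⟩` is anisotropic
over `K = F(√a)` (expressed componentwise), then `z·σ(z) ≠ θ` for every quaternion `z`. -/
theorem stmt9 {F : Type} [Field F] (hchar : (2 : F) ≠ 0)
    (a : F) (ha : ¬ IsSquare a) (γ θ : F) (hγ : γ ≠ 0)
    (hformF : ∀ x y z w : F,
      x ^ 2 - a * y ^ 2 + γ * a * z ^ 2 - θ * w ^ 2 = 0 →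
        x = 0 ∧ y = 0 ∧ z = 0 ∧ w = 0)
    (hformK : ∀ x₀ x₁ y₀ y₁ : F,
      γ * (x₀ ^ 2 + a * x₁ ^ 2) = θ * (y₀ ^ 2 + a * y₁ ^ 2) → γ * x₀ * x₁ = θ * y₀ * y₁ →
        x₀ = 0 ∧ x₁ = 0 ∧ y₀ = 0 ∧ y₁ = 0) :
    ∀ z : ℍ[F, a, γ], z * qsigma a γ z ≠ (θ : ℍ[F, a, γ]) := by
  rintro ⟨x0, x1, x2, x3⟩ h
  have h0 := congrArg QuaternionAlgebra.re h
  have h1 := congrArg QuaternionAlgebra.imI h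
  have h2 := congrArg QuaternionAlgebra.imJ h
  have h3 := congrArg QuaternionAlgebra.imK h
  simp [qsigma] at h0 h1 h2 h3
  by_cases hx : x2 = 0
  · subst hx
    have := (hformF x0 x1 x3 1 (by linear_combination h0)).2.2.2
    exact one_ne_zero this
  · have e0 : x0 = 0 := by
      have : 2 * x2 * x0 = 0 := by linear_combination h2
      simpa [hchar, hx] using this
    have e1 : x1 = 0 := by
      have : 2 * x2 * x1 = 0 := by linear_combination h3
      simpa [hchar, hx] using this
    subst e0 e1
    have e3 : 2 * (γ * x2 * x3) = 0 := by linear_combination h1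
    have e4 : γ * x2 * x3 = 0 := by
      rcases mul_eq_zero.1 e3 with h | h
      · exact absurd h hchar
      · exact h
    have := (hformK x2 x3 1 0 (by linear_combination h0) (by linear_combination e4)).2.2.1
    exact one_ne_zero this
end
end

section
/- Let F be a number field with ring of integers O_F, and let a ∈ O_F be a nonzero element such that the ideal a·O_F is prime. Let γ, θ ∈ O_F be such that neither θ nor γ is a square modulo a·O_F, i.e., for every b ∈ O_F, a does not divide b² − θ and a does not divide b² − γ. Then the quadratic form ⟨1, −a, γa, −θ⟩ is anisotropic over F: for all x, y, z, w ∈ F, if x² − a·y² + γ·a·z² − θ·w² = 0 then x = y = z = w = 0. -/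
open NumberField

noncomputable section

theorem aux_dvd {R : Type} [CommRing R] (a t : R) (hp : Prime a)
    (hm : (Ideal.span ({a} : Set R)).IsMaximal)
    (ht : ∀ b : R, ¬ (a ∣ b ^ 2 - t)) (X W : R) (h : a ∣ X ^ 2 - t * W ^ 2) :
    a ∣ X ∧ a ∣ W := by
  have hW : a ∣ W := by
    by_contra hW
    obtain ⟨v, i, hi, hv⟩ := hm.exists_inv (x := W)
      (fun h' => hW (Ideal.mem_span_singleton.1 h'))
    obtain ⟨c, rfl⟩ := Ideal.mem_span_singleton.1 hi
    apply ht (v * X)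
    obtain ⟨d, hd⟩ := h
    have e : v * W = 1 - a * c := by linear_combination hv
    refine ⟨v ^ 2 * d + t * (a * c ^ 2 - 2 * c), ?_⟩
    linear_combination v ^ 2 * hd + t * (v * W + 1 - a * c) * e
  refine ⟨?_, hW⟩
  obtain ⟨w, rfl⟩ := hW
  apply hp.dvd_of_dvd_pow (n := 2)
  have := dvd_add h (show a ∣ t * (a * w) ^ 2 from ⟨t * a * w ^ 2, by ring⟩)
  simpa using this

theorem aux_descent {R : Type} [CommRing R] [IsDomain R] (a g t : R) (hp : Prime a)
    (hm : (Ideal.span ({a} : Set R)).IsMaximal)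
    (ht : ∀ b : R, ¬ (a ∣ b ^ 2 - t)) (hg : ∀ b : R, ¬ (a ∣ b ^ 2 - g)) (n : ℕ) :
    ∀ X Y Z W : R, X ^ 2 - a * Y ^ 2 + g * a * Z ^ 2 - t * W ^ 2 = 0 →
      a ^ n ∣ X ∧ a ^ n ∣ Y ∧ a ^ n ∣ Z ∧ a ^ n ∣ W := by
  induction n with
  | zero => intros; simp
  | succ n ih =>
    intro X Y Z W h
    obtain ⟨⟨x, rfl⟩, ⟨w, rfl⟩⟩ := aux_dvd a t hp hm ht X W
      ⟨Y ^ 2 - g * Z ^ 2, by linear_combination h⟩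
    have h2 : a * x ^ 2 - Y ^ 2 + g * Z ^ 2 - t * a * w ^ 2 = 0 := by
      apply mul_left_cancel₀ hp.ne_zero
      linear_combination h
    obtain ⟨⟨y, rfl⟩, ⟨z, rfl⟩⟩ := aux_dvd a g hp hm hg Y Z
      ⟨x ^ 2 - t * w ^ 2, by linear_combination -h2⟩
    have h3 : x ^ 2 - a * y ^ 2 + g * a * z ^ 2 - t * w ^ 2 = 0 := by
      apply mul_left_cancel₀ hp.ne_zero
      linear_combination h2
    obtain ⟨h1, h2, h3, h4⟩ := ih x y z w h3
    simp only [pow_succ']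
    exact ⟨mul_dvd_mul_left _ h1, mul_dvd_mul_left _ h2, mul_dvd_mul_left _ h3,
      mul_dvd_mul_left _ h4⟩

/-- for a number field `F` with ring of integers `O_F`, if `a ∈ O_F` is
nonzero and generates a prime ideal, and neither `θ` nor `γ` is a square modulo `a·O_F`,
then the quadratic form `⟨1, −a, γa, −θ⟩` is anisotropic over `F`. -/
theorem stmt10 (F : Type) [Field F] [NumberField F]
    (a γ θ : 𝓞 F) (ha0 : a ≠ 0)
    (hprime : (Ideal.span ({a} : Set (𝓞 F))).IsPrime)
    (hθ : ∀ b : 𝓞 F, ¬ (a ∣ b ^ 2 - θ))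
    (hγ : ∀ b : 𝓞 F, ¬ (a ∣ b ^ 2 - γ)) :
    ∀ x y z w : F,
      x ^ 2 - (algebraMap (𝓞 F) F a) * y ^ 2
          + (algebraMap (𝓞 F) F γ) * (algebraMap (𝓞 F) F a) * z ^ 2
          - (algebraMap (𝓞 F) F θ) * w ^ 2 = 0 →
        x = 0 ∧ y = 0 ∧ z = 0 ∧ w = 0 := by
  intro x y z w h
  have hp : Prime a := (Ideal.span_singleton_prime ha0).1 hprime
  have hm : (Ideal.span ({a} : Set (𝓞 F))).IsMaximal :=
    hprime.isMaximal (by simpa using ha0)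
  have key : ∀ X : 𝓞 F, (∀ n : ℕ, a ^ n ∣ X) → X = 0 := by
    intro X hX
    by_contra h0
    obtain ⟨n, hn⟩ := FiniteMultiplicity.of_not_isUnit hp.not_unit h0
    exact hn (hX _)
  classical
  obtain ⟨⟨b, hb⟩, hB⟩ := IsLocalization.exist_integer_multiples_of_finset
    (nonZeroDivisors (𝓞 F)) ({x, y, z, w} : Finset F)
  obtain ⟨X, hX⟩ := hB x (by simp)
  obtain ⟨Y, hY⟩ := hB y (by simp)
  obtain ⟨Z, hZ⟩ := hB z (by simp)
  obtain ⟨W, hW⟩ := hB w (by simp)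
  have hb0 : algebraMap (𝓞 F) F b ≠ 0 := by
    simpa using nonZeroDivisors.ne_zero hb
  simp only [Algebra.smul_def] at hX hY hZ hW
  have hint : X ^ 2 - a * Y ^ 2 + γ * a * Z ^ 2 - θ * W ^ 2 = 0 := by
    apply FaithfulSMul.algebraMap_injective (𝓞 F) F
    simp only [map_sub, map_add, map_mul, map_pow, map_zero, hX, hY, hZ, hW]
    linear_combination (algebraMap (𝓞 F) F b) ^ 2 * h
  have D := fun n => aux_descent a γ θ hp hm hθ hγ n X Y Z W hint
  have fin : ∀ (u : F) (U : 𝓞 F), algebraMap (𝓞 F) F U = algebraMap (𝓞 F) F b * u →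
      (∀ n : ℕ, a ^ n ∣ U) → u = 0 := by
    intro u U hU hd
    rw [key U hd, map_zero] at hU
    exact (mul_eq_zero.1 hU.symm).resolve_left hb0
  exact ⟨fin x X hX fun n => (D n).1, fin y Y hY fun n => (D n).2.1,
    fin z Z hZ fun n => (D n).2.2.1, fin w W hW fun n => (D n).2.2.2⟩
end
end

section
/- In the field F = ℚ(√−7), the element −17 is not a sum of three squares: for all x, y, z ∈ F, x² + y² + z² ≠ −17. -/
open Polynomial

noncomputable section

/-- The quadratic number field `F = ℚ(√−7)`, realized as `ℚ[X]/(X² + 7)`. -/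
def Qsqrtm7 : Type := AdjoinRoot ((X : ℚ[X]) ^ 2 + C 7)

instance : CommRing Qsqrtm7 := inferInstanceAs (CommRing (AdjoinRoot ((X : ℚ[X]) ^ 2 + C 7)))

lemma aux_sqrt : ∃ s : ℚ_[2], s ^ 2 + 7 = 0 := by
  have h8 : ‖(8 : ℤ_[2])‖ = 1 / 8 := by
    have := PadicInt.norm_p_pow (p := 2) 3
    norm_num at this
    rw [this]
  have h2 : ‖(2 : ℤ_[2])‖ = 1 / 2 := by
    have := PadicInt.norm_p (p := 2)
    norm_num at this
    rw [this]
  obtain ⟨z, hz, -⟩ := hensels_lemma (p := 2) (R := ℤ_[2]) (F := (X ^ 2 + C 7 : ℤ_[2][X])) (a := 1) (by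
    have e1 : aeval (1 : ℤ_[2]) (X ^ 2 + C 7 : ℤ_[2][X]) = 8 := by
      simp [aeval_def]; norm_num
    have e2 : aeval (1 : ℤ_[2]) (derivative (X ^ 2 + C 7 : ℤ_[2][X])) = 2 := by
      simp [aeval_def]; norm_num
    rw [e1, e2, h8, h2]; norm_num)
  refine ⟨(z : ℚ_[2]), ?_⟩
  have h : z ^ 2 + 7 = 0 := by simpa [aeval_def] using hz
  exact_mod_cast congrArg (fun t : ℤ_[2] => (t : ℚ_[2])) h

lemma aux_mod : ∀ a b c d : ZMod 8, a ^ 2 + b ^ 2 + c ^ 2 + 17 * d ^ 2 = 0 →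
    a ≠ 1 ∧ b ≠ 1 ∧ c ≠ 1 ∧ d ≠ 1 := by
  decide +kernel

lemma aux_int (a b c d : ℤ_[2]) (h : a ^ 2 + b ^ 2 + c ^ 2 + 17 * d ^ 2 = 0) :
    a ≠ 1 ∧ b ≠ 1 ∧ c ≠ 1 ∧ d ≠ 1 := by
  let f : ℤ_[2] →+* ZMod 8 := PadicInt.toZModPow (p := 2) 3
  have h' := congrArg f h
  simp only [map_add, map_mul, map_pow, map_zero, map_ofNat] at h'
  obtain ⟨h1, h2, h3, h4⟩ := aux_mod _ _ _ _ h'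
  refine ⟨?_, ?_, ?_, ?_⟩ <;> rintro rfl <;> simp_all

lemma aux_div (a b c d m : ℚ_[2]) (h : a ^ 2 + b ^ 2 + c ^ 2 + 17 * d ^ 2 = 0) (hm : m ≠ 0)
    (ha : ‖a‖ ≤ ‖m‖) (hb : ‖b‖ ≤ ‖m‖) (hc : ‖c‖ ≤ ‖m‖) (hd : ‖d‖ ≤ ‖m‖) :
    m ≠ a ∧ m ≠ b ∧ m ≠ c ∧ m ≠ d := by
  have key : ∀ t : ℚ_[2], ‖t‖ ≤ ‖m‖ → ‖t / m‖ ≤ 1 := fun t ht => by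
    rw [norm_div]; exact div_le_one_of_le₀ ht (norm_nonneg _)
  obtain ⟨h1, h2, h3, h4⟩ := aux_int ⟨a / m, key a ha⟩ ⟨b / m, key b hb⟩ ⟨c / m, key c hc⟩
    ⟨d / m, key d hd⟩ (by
      apply Subtype.ext
      change (a / m) ^ 2 + (b / m) ^ 2 + (c / m) ^ 2 + 17 * (d / m) ^ 2 = 0
      field_simp
      rw [h]; simp)
  refine ⟨?_, ?_, ?_, ?_⟩ <;> rintro rfl
  · exact h1 (Subtype.ext (div_self hm))
  · exact h2 (Subtype.ext (div_self hm))
  · exact h3 (Subtype.ext (div_self hm))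
  · exact h4 (Subtype.ext (div_self hm))

lemma aux_Q2 (x y z : ℚ_[2]) : x ^ 2 + y ^ 2 + z ^ 2 ≠ -17 := by
  intro h
  have h0 : x ^ 2 + y ^ 2 + z ^ 2 + 17 * 1 ^ 2 = 0 := by rw [h]; ring
  obtain ⟨i, hi⟩ := Finite.exists_max (fun i : Fin 4 => ‖(![x, y, z, 1] : Fin 4 → ℚ_[2]) i‖)
  have k0 := hi 0
  have k1 := hi 1
  have k2 := hi 2
  have k3 := hi 3
  have hm : (![x, y, z, 1] : Fin 4 → ℚ_[2]) i ≠ 0 := by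
    intro h'
    rw [h'] at k3
    simp at k3
    linarith
  obtain ⟨h1, h2, h3, h4⟩ := aux_div x y z 1 _ h0 hm k0 k1 k2 k3
  fin_cases i
  · exact h1 rfl
  · exact h2 rfl
  · exact h3 rfl
  · exact h4 rfl

/-- in `F = ℚ(√−7)`, the element `−17` is not a sum of three squares. -/
theorem stmt12 : ∀ x y z : Qsqrtm7, x ^ 2 + y ^ 2 + z ^ 2 ≠ -17 := by
  intro x y z h
  obtain ⟨s, hs⟩ := aux_sqrt
  let f : Qsqrtm7 →+* ℚ_[2] := AdjoinRoot.lift (f := (X : ℚ[X]) ^ 2 + C 7) (algebraMap ℚ ℚ_[2]) s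
    (by simpa using hs)
  apply aux_Q2 (f x) (f y) (f z)
  rw [← map_pow, ← map_pow, ← map_pow, ← map_add, ← map_add, h, map_neg, map_ofNat]
end
end

section
/- Let L be a field and σ, τ ring automorphisms of L with σ³ = id, τ² = id and σ∘τ = τ∘σ. Let γ ∈ L with σ(γ) = γ and τ(γ) = γ, and let θ ∈ L with σ(θ) = θ and τ(θ³) ≠ θ³. Let D ⊆ M₃(L) be the set of matrices of the form [[a, γ·σ(c), γ·σ²(b)], [b, σ(a), γ·σ²(c)], [c, σ(b), σ²(a)]] with a, b, c ∈ L, and assume every nonzero element of D is an invertible matrix. Then for all X, Y ∈ D with (X,Y) ≠ (0,0), the 6×6 block matrix α_θ(X,Y) = [[X, θ·τ(Y)],[Y, τ(X)]] is invertible; i.e., the iterated construction satisfies the full diversity property. -/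
open Matrix

noncomputable section

/-- The image `D ⊆ M₃(L)` of the degree-3 cyclic algebra `(L/K, σ, γ)` under its
left-regular representation. -/
def cyclicRep3 {L : Type} [Field L] (σ : RingAut L) (γ : L) :
    Set (Matrix (Fin 3) (Fin 3) L) :=
  {M | ∃ a b c : L,
    M = !![a, γ * σ c, γ * σ (σ b);
           b, σ a, γ * σ (σ c);
           c, σ b, σ (σ a)]}

def auxP {L : Type} [Field L] (γ : L) : Matrix (Fin 3) (Fin 3) L :=
  !![0, 0, γ; 1, 0, 0; 0, 1, 0]

lemma mem_iff_s17 {L : Type} [Field L] (σ : RingAut L) (hσ3 : σ ^ 3 = 1) (γ : L) (hσγ : σ γ = γ)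
    (M : Matrix (Fin 3) (Fin 3) L) :
    M ∈ cyclicRep3 σ γ ↔ M * auxP γ = auxP γ * M.map ⇑σ := by
  have h3 : ∀ x, σ (σ (σ x)) = x := fun x => by
    have := congrArg (fun f : RingAut L => f x) hσ3
    simpa [pow_succ] using this
  constructor
  · rintro ⟨a, b, c, rfl⟩
    ext i j
    fin_cases i <;> fin_cases j <;>
      simp [auxP, Matrix.mul_apply, Fin.sum_univ_three, hσγ, h3, mul_comm]
  · intro h
    have e := fun i j => congrFun (congrFun h i) j
    refine ⟨M 0 0, M 1 0, M 2 0, ?_⟩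
    have e00 := e 0 0
    have e10 := e 1 0
    have e20 := e 2 0
    have e01 := e 0 1
    have e11 := e 1 1
    have e21 := e 2 1
    simp [auxP, Matrix.mul_apply, Fin.sum_univ_three] at e00 e10 e20 e01 e11 e21
    ext i j
    fin_cases i <;> fin_cases j <;> simp [e00, e10, e20, e01, e11, e21, hσγ]

/-- let `σ, τ` be commuting ring automorphisms of `L` with `σ³ = id` and
`τ² = id`, let `γ` be fixed by `σ` and `τ`, and let `θ` be fixed by `σ` with
`τ(θ³) ≠ θ³`. If every nonzero element of `D` is invertible, then for all `X, Y ∈ D`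
not both zero, the block matrix `α_θ(X,Y) = [[X, θ·τ(Y)], [Y, τ(X)]]` is invertible:
the iterated construction is fully diverse. -/
theorem stmt17 {L : Type} [Field L] (σ τ : RingAut L)
    (hσ3 : σ ^ 3 = 1) (hτ2 : τ ^ 2 = 1) (hcomm : σ * τ = τ * σ)
    (γ : L) (hσγ : σ γ = γ) (hτγ : τ γ = γ)
    (θ : L) (hσθ : σ θ = θ) (hτθ : τ (θ ^ 3) ≠ θ ^ 3)
    (hdiv : ∀ M ∈ cyclicRep3 σ γ, M ≠ 0 → IsUnit M) :
    ∀ X ∈ cyclicRep3 σ γ, ∀ Y ∈ cyclicRep3 σ γ, ¬ (X = 0 ∧ Y = 0) →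
      IsUnit (Matrix.fromBlocks X (θ • Y.map ⇑τ) Y (X.map ⇑τ)) := by
  classical
  intro X hX Y hY hne
  have hττ : ∀ x, τ (τ x) = x := fun x => by
    have := congrArg (fun f : RingAut L => f x) hτ2
    simpa [pow_succ] using this
  have hc : ∀ x, σ (τ x) = τ (σ x) := fun x => by
    have := congrArg (fun f : RingAut L => f x) hcomm
    simpa using this
  have hdet : ∀ M : Matrix (Fin 3) (Fin 3) L, (M.map ⇑τ).det = τ M.det := fun M =>
    (RingHom.map_det (τ : L →+* L) M).symm
  have hmapu : ∀ M : Matrix (Fin 3) (Fin 3) L, IsUnit M → IsUnit (M.map ⇑τ) := by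
    intro M hM
    rw [Matrix.isUnit_iff_isUnit_det] at hM ⊢
    rw [hdet]
    exact hM.map τ
  have hθ0 : θ ≠ 0 := by
    rintro rfl
    simp at hτθ
  by_cases hX0 : X = 0
  · have hY0 : Y ≠ 0 := fun h => hne ⟨hX0, h⟩
    have uY := hdiv Y hY hY0
    have uY' := hmapu Y uY
    rw [Matrix.isUnit_iff_isUnit_det] at uY uY'
    have hz : (0 : Matrix (Fin 3) (Fin 3) L).map ⇑τ = 0 := by
      ext i j; simp
    subst hX0
    rw [hz]
    refine IsUnit.of_mul_eq_one
      (b := Matrix.fromBlocks 0 Y⁻¹ (θ⁻¹ • (Y.map ⇑τ)⁻¹) 0) ?_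
    rw [Matrix.fromBlocks_multiply]
    simp [Matrix.mul_nonsing_inv _ uY, Matrix.mul_nonsing_inv _ uY', smul_smul, hθ0]
  have uX := hdiv X hX hX0
  have uX' := hmapu X uX
  have dX := (Matrix.isUnit_iff_isUnit_det _).1 uX
  have dX' := (Matrix.isUnit_iff_isUnit_det _).1 uX'
  let _ := uX'.invertible
  rw [Matrix.isUnit_fromBlocks_iff_of_invertible₂₂, Matrix.invOf_eq_nonsing_inv]
  have hτP : (auxP γ).map ⇑τ = auxP γ := by
    ext i j
    fin_cases i <;> fin_cases j <;> simp [auxP, hτγ]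
  have hmem : ∀ M : Matrix (Fin 3) (Fin 3) L, M * auxP γ = auxP γ * M.map ⇑σ →
      M.map ⇑τ * auxP γ = auxP γ * (M.map ⇑τ).map ⇑σ := by
    intro M hM
    have h1 := congrArg (fun N : Matrix (Fin 3) (Fin 3) L => N.map ⇑τ) hM
    simp only [Matrix.map_mul, hτP] at h1
    rw [h1]
    congr 1
    ext i j
    simp [hc]
  have hinv : ∀ M : Matrix (Fin 3) (Fin 3) L, IsUnit M.det → M * auxP γ = auxP γ * M.map ⇑σ →
      M⁻¹ * auxP γ = auxP γ * M⁻¹.map ⇑σ := by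
    intro M hu hM
    have h1 : M.map ⇑σ * M⁻¹.map ⇑σ = 1 := by
      rw [← Matrix.map_mul, Matrix.mul_nonsing_inv _ hu]
      exact Matrix.map_one _ (map_zero σ) (map_one σ)
    calc M⁻¹ * auxP γ = M⁻¹ * (auxP γ * M.map ⇑σ) * M⁻¹.map ⇑σ := by
          simp only [Matrix.mul_assoc, h1, Matrix.mul_one]
      _ = (M⁻¹ * M) * auxP γ * M⁻¹.map ⇑σ := by rw [← hM]; simp only [Matrix.mul_assoc]
      _ = _ := by rw [Matrix.nonsing_inv_mul _ hu, Matrix.one_mul]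
  have hX1 := (mem_iff_s17 σ hσ3 γ hσγ X).1 hX
  have hY1 := (mem_iff_s17 σ hσ3 γ hσγ Y).1 hY
  have hY2 := hmem Y hY1
  have hX2 := hinv _ dX' (hmem X hX1)
  refine hdiv _ ((mem_iff_s17 σ hσ3 γ hσγ _).2 ?_) ?_
  · have hsub : ∀ A B C : Matrix (Fin 3) (Fin 3) L,
        (X - θ • A * B * C).map ⇑σ = X.map ⇑σ - θ • (A.map ⇑σ * (B.map ⇑σ * C.map ⇑σ)) := by
      intro A B C
      rw [← Matrix.map_mul, ← Matrix.map_mul, Matrix.smul_mul, Matrix.smul_mul, Matrix.mul_assoc]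
      generalize A * (B * C) = N
      ext i j
      simp [hσθ]
    rw [hsub, Matrix.sub_mul, Matrix.mul_sub, hX1]
    congr 1
    rw [Matrix.mul_smul, ← Matrix.mul_assoc (auxP γ), ← hY2, Matrix.mul_assoc (Y.map ⇑τ),
      ← Matrix.mul_assoc (auxP γ), ← hX2, Matrix.mul_assoc _ (auxP γ), ← hY1]
    simp only [Matrix.smul_mul, Matrix.mul_assoc]
  · intro h0
    apply hτθ
    have h1 := congrArg Matrix.det (sub_eq_zero.1 h0)
    have hi : (X.map ⇑τ)⁻¹.det * τ X.det = 1 := by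
      rw [← hdet, ← Matrix.det_mul, Matrix.nonsing_inv_mul _ dX', Matrix.det_one]
    rw [Matrix.det_mul, Matrix.det_mul, Matrix.det_smul, hdet] at h1
    simp only [Fintype.card_fin] at h1
    have h2 : X.det * τ X.det = θ ^ 3 * (τ Y.det * Y.det) := by
      linear_combination (τ X.det) * h1 + θ ^ 3 * τ Y.det * Y.det * hi
    have h3 := congrArg τ h2
    rw [map_mul, map_mul, map_mul, hττ, hττ] at h3
    have hx : X.det * τ X.det ≠ 0 :=
      mul_ne_zero dX.ne_zero (by rw [← hdet]; exact dX'.ne_zero)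
    have hy : τ Y.det * Y.det ≠ 0 := by
      intro h
      rw [h, mul_zero] at h2
      exact hx h2
    apply mul_right_cancel₀ hy
    linear_combination h2 - h3
end
end

section
/- Let L = ℚ(ζ₇) be the 7th cyclotomic field with ζ₇ a primitive 7th root of unity, let σ be the ℚ-algebra automorphism of L determined by σ(ζ₇) = ζ₇², and let K be the fixed field of the subgroup generated by σ (so K = ℚ(√−7) and L/K is cyclic of degree 3). Then 3 is not a norm of the extension L/K: for every x ∈ L, N_{L/K}(x) ≠ 3. (Consequently the cyclic algebra (L/K, σ, 3) is a division algebra.) -/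
noncomputable section

open NumberField

instance aux_inst : IsCyclotomicExtension {7} ℚ (CyclotomicField 7 ℚ) :=
  CyclotomicField.isCyclotomicExtension 7 ℚ

lemma aux_finrank : Module.finrank ℚ (CyclotomicField 7 ℚ) = 6 := by
  rw [IsCyclotomicExtension.finrank (n := 7) (CyclotomicField 7 ℚ)
    (Polynomial.cyclotomic.irreducible_rat (by norm_num))]
  decide

lemma aux_order : orderOf ((3 : ℕ) : ZMod 7) = 6 := by
  rw [orderOf_eq_iff (by norm_num)]
  decide

lemma aux_dvd_s18 (y : 𝓞 (CyclotomicField 7 ℚ)) (h : (3 : ℤ) ∣ Algebra.norm ℤ y) :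
    (3 : 𝓞 (CyclotomicField 7 ℚ)) ∣ y := by
  have h3 : Fact (Nat.Prime 3) := ⟨by norm_num⟩
  obtain ⟨P, hP, hu, hd⟩ := Ideal.exists_isMaximal_dvd_of_dvd_absNorm' h3.out (Ideal.span {y})
    (by rw [Ideal.absNorm_span_singleton]; exact Int.natCast_dvd.mp h)
  have hl : P.LiesOver (Ideal.span {((3 : ℕ) : ℤ)}) := ⟨hu.symm⟩
  have hf := IsCyclotomicExtension.Rat.inertiaDeg_eq_of_not_dvd (m := 7) 3
    (CyclotomicField 7 ℚ) P (by norm_num)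
  rw [aux_order] at hf
  have hn := Ideal.absNorm_pow_inertiaDeg (Ideal.span {((3 : ℕ) : ℤ)}) P
  rw [hf] at hn
  have hn' : Ideal.absNorm P = 3 ^ 6 := by
    rw [← hn]; simp
  have h3n : Ideal.absNorm (Ideal.span {((3 : ℕ) : 𝓞 (CyclotomicField 7 ℚ))}) = 3 ^ 6 := by
    rw [Ideal.absNorm_span_natCast, RingOfIntegers.rank, aux_finrank]
  have hmem : ((3 : ℕ) : 𝓞 (CyclotomicField 7 ℚ)) ∈ P := by
    have : ((3 : ℕ) : ℤ) ∈ P.under ℤ := by rw [hu]; exact Ideal.mem_span_singleton_self _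
    simpa [Ideal.under] using this
  obtain ⟨J, hJ⟩ : P ∣ Ideal.span {((3 : ℕ) : 𝓞 (CyclotomicField 7 ℚ))} := by
    rw [Ideal.dvd_iff_le, Ideal.span_singleton_le_iff_mem]; exact hmem
  have hJ1 : Ideal.absNorm J = 1 := by
    have := congrArg Ideal.absNorm hJ
    rw [map_mul, h3n, hn'] at this
    omega
  rw [Ideal.absNorm_eq_one_iff] at hJ1
  rw [hJ1, Ideal.mul_top] at hJ
  rw [← hJ, Ideal.dvd_span_singleton, Ideal.mem_span_singleton] at hd
  exact_mod_cast hd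

lemma aux_val (y : 𝓞 (CyclotomicField 7 ℚ)) (hy : y ≠ 0) :
    ∃ (k : ℕ) (u : ℤ), Algebra.norm ℤ y = 3 ^ (6 * k) * u ∧ ¬ (3 : ℤ) ∣ u := by
  have hN : Algebra.norm ℤ (3 : 𝓞 (CyclotomicField 7 ℚ)) = 3 ^ 6 := by
    have := Algebra.norm_algebraMap (R := ℤ) (S := 𝓞 (CyclotomicField 7 ℚ)) 3
    rw [RingOfIntegers.rank, aux_finrank] at this
    simpa using this
  have hu : ¬ IsUnit (3 : 𝓞 (CyclotomicField 7 ℚ)) := by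
    intro h
    have := h.map (Algebra.norm ℤ)
    rw [hN, Int.isUnit_iff] at this
    omega
  obtain ⟨z, hz, hd⟩ := (FiniteMultiplicity.of_not_isUnit hu hy).exists_eq_pow_mul_and_not_dvd
  refine ⟨multiplicity 3 y, Algebra.norm ℤ z, ?_, fun h => hd (aux_dvd_s18 z h)⟩
  conv_lhs => rw [hz]
  rw [map_mul, map_pow, hN, pow_mul]

lemma aux_pow {a b : ℕ} {u v : ℤ} (hu : ¬ (3 : ℤ) ∣ u) (hv : ¬ (3 : ℤ) ∣ v)
    (h : 3 ^ a * u = 3 ^ b * v) : a = b := by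
  have key : ∀ (a b : ℕ) (u v : ℤ), ¬ (3 : ℤ) ∣ u → 3 ^ a * u = 3 ^ b * v → b ≤ a := by
    intro a b u v hu h
    by_contra! hlt
    obtain ⟨c, rfl⟩ := Nat.exists_eq_add_of_lt hlt
    apply hu
    refine ⟨3 ^ c * v, ?_⟩
    have : (3 : ℤ) ^ a ≠ 0 := by positivity
    apply mul_left_cancel₀ this
    rw [h]; ring
  exact le_antisymm (key b a v u hv h.symm) (key a b u v hu h)

/-- let `L = ℚ(ζ₇)` be the 7th cyclotomic field, `σ` the `ℚ`-algebra
automorphism with `σ(ζ₇) = ζ₇²`, and `K` the fixed field of `⟨σ⟩` (so `K = ℚ(√−7)` and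
`L/K` is cyclic of degree 3). Then `3` is not a norm of `L/K`: `N_{L/K}(x) ≠ 3` for all
`x ∈ L`. Consequently the cyclic algebra `(L/K, σ, 3)` is a division algebra. -/
theorem stmt18 (ζ : CyclotomicField 7 ℚ) (hζ : IsPrimitiveRoot ζ 7)
    (σ : CyclotomicField 7 ℚ ≃ₐ[ℚ] CyclotomicField 7 ℚ) (hσ : σ ζ = ζ ^ 2) :
    ∀ x : CyclotomicField 7 ℚ,
      Algebra.norm (IntermediateField.fixedField (Subgroup.zpowers σ)) x ≠ 3 := by
  intro x hx
  set K := IntermediateField.fixedField (Subgroup.zpowers σ) with hK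
  have hσ1 : σ ≠ 1 := by
    rintro rfl
    have h1 : ζ ^ 1 = ζ ^ 2 := by simpa using hσ
    have := hζ.pow_inj (by norm_num) (by norm_num) h1
    omega
  have hLK : Module.finrank K (CyclotomicField 7 ℚ) ≠ 1 := by
    rw [hK, IntermediateField.finrank_fixedField_eq_card, Nat.card_zpowers]
    simpa using hσ1
  have hmul := Module.finrank_mul_finrank ℚ K (CyclotomicField 7 ℚ)
  rw [aux_finrank] at hmul
  have hNx : Algebra.norm ℚ x = 3 ^ Module.finrank ℚ K := by
    rw [← Algebra.norm_norm (R := ℚ) (S := K), hx]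
    simpa using Algebra.norm_algebraMap (R := ℚ) (S := K) 3
  obtain ⟨a, b, hb, hab⟩ := IsFractionRing.div_surjective (𝓞 (CyclotomicField 7 ℚ)) x
  have hb0 : b ≠ 0 := nonZeroDivisors.ne_zero hb
  have hb0' : algebraMap (𝓞 (CyclotomicField 7 ℚ)) (CyclotomicField 7 ℚ) b ≠ 0 := by
    simpa using hb0
  have hab' := (div_eq_iff hb0').mp hab
  have hn := congrArg (Algebra.norm ℚ) hab'
  rw [map_mul, hNx] at hn
  have ha' : ((Algebra.norm ℤ a : ℤ) : ℚ) =
      3 ^ Module.finrank ℚ K * ((Algebra.norm ℤ b : ℤ) : ℚ) := by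
    rw [Algebra.coe_norm_int, Algebra.coe_norm_int]; exact hn
  have hZ : Algebra.norm ℤ a = 3 ^ Module.finrank ℚ K * Algebra.norm ℤ b := by
    exact_mod_cast ha'
  have ha0 : a ≠ 0 := by
    rintro rfl
    have : (3 : ℚ) ^ Module.finrank ℚ K ≠ 0 := by positivity
    rw [← hNx, ← hab] at this
    simp at this
  obtain ⟨k, u, h1, hu⟩ := aux_val a ha0
  obtain ⟨l, v, h2, hv⟩ := aux_val b hb0
  rw [h1, h2, ← mul_assoc, ← pow_add] at hZ
  have he := aux_pow hu hv hZ
  have hdvd : 6 ∣ Module.finrank ℚ K := by omega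
  obtain ⟨c, hc⟩ := hdvd
  rw [hc, mul_assoc] at hmul
  have : c * Module.finrank K (CyclotomicField 7 ℚ) = 1 := by omega
  exact hLK (Nat.eq_one_of_mul_eq_one_left this)
end
end

section
/- Let L = ℚ(ζ₂₈) be the 28th cyclotomic field with ζ a primitive 28th root of unity (so L = ℚ(ζ₇, i) with i = ζ⁷), let σ be the ℚ-algebra automorphism of L determined by σ(ζ) = ζ⁹ (it fixes ζ⁷ and has order 3), and let K be the fixed field of the subgroup generated by σ (so K = ℚ(i, √7) and L/K is cyclic of degree 3). Then 1 + i is not a norm of the extension L/K: for every x ∈ L, the image of N_{L/K}(x) in L is different from 1 + ζ⁷. (Consequently the cyclic algebra (L/K, σ, 1+i) is a division algebra.) -/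
theorem aux_cyc : IsCyclotomicExtension {28} ℚ (CyclotomicField 28 ℚ) :=
  CyclotomicField.isCyclotomicExtension 28 ℚ

open Polynomial in
theorem aux_dvd_s19 {L : Type*} [Field L] [CharZero L] {n : ℕ} (hn : 0 < n) {w : L}
    (hw : IsPrimitiveRoot w n) {p : ℤ[X]} (hp : aeval w p = 0) : cyclotomic n ℤ ∣ p := by
  rw [cyclotomic_eq_minpoly hw hn]
  exact minpoly.isIntegrallyClosed_dvd (hw.isIntegral hn) hp

open Polynomial in
theorem aux_seven {L : Type*} [Field L] [CharZero L] {w : L}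
    (hw : IsPrimitiveRoot w 7) {p : ℤ[X]} (hp : aeval w p = 0) : (7 : ℤ) ∣ p.eval 1 := by
  obtain ⟨q, rfl⟩ := aux_dvd_s19 (by norm_num) hw hp
  have : Fact (Nat.Prime 7) := ⟨by norm_num⟩
  rw [eval_mul, eval_one_cyclotomic_prime]
  exact ⟨_, rfl⟩

theorem aux_rel {L : Type*} [Field L] {w : L}
    (hw : IsPrimitiveRoot w 7) : 1 + w + w^2 + w^3 + w^4 + w^5 + w^6 = 0 := by
  have h := hw.geom_sum_eq_zero (by norm_num)
  simpa [Finset.sum_range_succ] using h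

theorem aux_unit {L : Type*} [Field L] {w : L} (hw : IsPrimitiveRoot w 7) :
    (7 : L) = (1 - w)^6 * (3 + 3 * w - 4 * w^3 - 6 * w^4 - 4 * w^5) := by
  linear_combination (-(-4 - 11 * w + 42 * w^2 - 46 * w^3 + 22 * w^4 - 4 * w^5)) * aux_rel hw

open Polynomial in
theorem aux_factor {L : Type*} [Field L] (P : ℤ[X]) (h : (7 : ℤ) ∣ P.eval 1) :
    ∃ Q : ℤ[X], ∀ w : L, IsPrimitiveRoot w 7 → aeval w P = (1 - w) * aeval w Q := by
  obtain ⟨c, hc⟩ := h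
  obtain ⟨H, hH⟩ := X_sub_C_dvd_sub_C_eval (p := P) (a := (1 : ℤ))
  refine ⟨C c * ((1 - X)^5 * (3 + 3 * X - 4 * X^3 - 6 * X^4 - 4 * X^5)) - H, fun w hw => ?_⟩
  have h1 : P = (X - C 1) * H + C (7 * c) := by rw [← hH, hc]; ring
  have h2 := aux_unit hw
  rw [h1]
  simp only [map_sub, map_mul, map_add, map_pow, map_ofNat, map_one, aeval_X, aeval_C]
  simp
  linear_combination (c : L) * h2

theorem aux_zmod (a b : ℤ) (hb : ¬ (7 : ℤ) ∣ b) (h : (7 : ℤ) ∣ a^3 - 2 * b^3) : False := by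
  replace hb := fun h => hb ((ZMod.intCast_zmod_eq_zero_iff_dvd b 7).1 h)
  have h' := (ZMod.intCast_zmod_eq_zero_iff_dvd (a^3 - 2 * b^3) 7).2 h
  push_cast at h'
  revert hb h'
  generalize (a : ZMod 7) = x
  generalize (b : ZMod 7) = y
  revert x y
  decide

open Polynomial in
theorem aux_descent_s19 {L : Type*} [Field L] [CharZero L] {w : L} (hw : IsPrimitiveRoot w 7)
    (G : ℤ[X]) (hG : ¬ (7 : ℤ) ∣ G.eval 1) (k : ℕ) : ∀ P : ℤ[X],
    aeval w P * aeval (w^2) P * aeval (w^4) P =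
      2 * ((1 - w) * (1 - w^2) * (1 - w^4))^k *
        (aeval w G * aeval (w^2) G * aeval (w^4) G) → False := by
  have hw2 : IsPrimitiveRoot (w^2) 7 := hw.pow_of_coprime 2 (by norm_num)
  have hw4 : IsPrimitiveRoot (w^4) 7 := hw.pow_of_coprime 4 (by norm_num)
  induction k with
  | zero =>
    intro P h
    have := aux_seven hw (p := P * P.comp (X^2) * P.comp (X^4) -
      2 * (G * G.comp (X^2) * G.comp (X^4))) (by
        simp only [map_sub, map_mul, map_pow, map_ofNat, map_one, aeval_X, aeval_comp, h]
        ring)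
    simp [eval_comp] at this
    refine aux_zmod (P.eval 1) _ hG ?_
    convert this using 1
    ring
  | succ k ih =>
    intro P h
    have := aux_seven hw (p := P * P.comp (X^2) * P.comp (X^4) -
      2 * ((1 - X) * (1 - X^2) * (1 - X^4))^(k+1) * (G * G.comp (X^2) * G.comp (X^4))) (by
        simp only [map_sub, map_mul, map_pow, map_ofNat, map_one, aeval_X, aeval_comp, h]
        ring)
    simp [eval_comp] at this
    have hp : Prime (7 : ℤ) := by norm_num
    have h7 : (7 : ℤ) ∣ P.eval 1 := by
      rcases hp.dvd_or_dvd this with h | h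
      · rcases hp.dvd_or_dvd h with h | h <;> exact h
      · exact h
    obtain ⟨Q, hQ⟩ := aux_factor (L := L) P h7
    apply ih Q
    rw [hQ w hw, hQ _ hw2, hQ _ hw4] at h
    have e1 : (1 - w) ≠ 0 := sub_ne_zero.2 (hw.ne_one (by norm_num)).symm
    have e2 : (1 - w^2) ≠ 0 := sub_ne_zero.2 (hw2.ne_one (by norm_num)).symm
    have e4 : (1 - w^4) ≠ 0 := sub_ne_zero.2 (hw4.ne_one (by norm_num)).symm
    apply mul_left_cancel₀ (mul_ne_zero (mul_ne_zero e1 e2) e4)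
    linear_combination h

open Polynomial in
theorem aux_main {L : Type*} [Field L] [CharZero L] {w : L} (hw : IsPrimitiveRoot w 7)
    (P : ℤ[X]) (n : ℤ) (hn : n ≠ 0)
    (h : aeval w P * aeval (w^2) P * aeval (w^4) P = 2 * (n : L)^3) : False := by
  have hw2 : IsPrimitiveRoot (w^2) 7 := hw.pow_of_coprime 2 (by norm_num)
  have hw4 : IsPrimitiveRoot (w^4) 7 := hw.pow_of_coprime 4 (by norm_num)
  have hp : Prime (7 : ℤ) := by norm_num
  have hfm : FiniteMultiplicity (7 : ℤ) n := Int.finiteMultiplicity_iff.2 ⟨by norm_num, hn⟩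
  obtain ⟨m, hk, hm⟩ := hfm.exists_eq_pow_mul_and_not_dvd
  generalize multiplicity (7 : ℤ) n = k at hk
  refine aux_descent_s19 hw ((3 + 3 * X - 4 * X^3 - 6 * X^4 - 4 * X^5)^k * C m) ?_ (6 * k) P ?_
  · intro hd
    simp at hd
    rcases hp.dvd_or_dvd hd with h | h
    · have := hp.dvd_of_dvd_pow h
      norm_num at this
    · exact hm h
  · rw [h, hk]
    have a1 := congrArg (· ^ k) (aux_unit hw)
    have a2 := congrArg (· ^ k) (aux_unit hw2)
    have a4 := congrArg (· ^ k) (aux_unit hw4)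
    simp only [mul_pow, ← pow_mul] at a1 a2 a4
    simp only [map_mul, map_pow, map_add, map_sub, aeval_X, aeval_C, map_ofNat, mul_pow,
      ← pow_mul, algebraMap_int_eq, eq_intCast (Int.castRingHom L), Int.cast_mul, Int.cast_pow,
      Int.cast_ofNat] at *
    calc (2 : L) * (7 ^ (k * 3) * (m:L) ^ 3) = 2 * (7^k * 7^k * 7^k * (m:L)^3) := by ring
      _ = _ := by
        nth_rewrite 1 [a1]
        nth_rewrite 1 [a2]
        nth_rewrite 1 [a4]
        ring

open Polynomial in
theorem aux_split {L : Type*} [Field L] (f : ℤ[X]) : ∃ p q : ℤ[X], ∀ w j : L, j^2 = -1 →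
    aeval (-(w^2 * j)) f = aeval w p + j * aeval w q := by
  induction f using Polynomial.induction_on with
  | C a => exact ⟨C a, 0, fun w j hj => by simp⟩
  | add f g hf hg =>
    obtain ⟨p, q, h⟩ := hf
    obtain ⟨p', q', h'⟩ := hg
    exact ⟨p + p', q + q', fun w j hj => by simp [h w j hj, h' w j hj]; ring⟩
  | monomial n a h =>
    obtain ⟨p, q, h⟩ := h
    refine ⟨X^2 * q, - X^2 * p, fun w j hj => ?_⟩
    have := h w j hj
    rw [pow_succ X n, ← mul_assoc, map_mul, this]
    simp
    linear_combination (- w^2 * aeval w q) * hj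

open Polynomial in
theorem aux_clear {L : Type*} [Field L] [CharZero L] [Algebra ℚ L]
    [IsCyclotomicExtension {28} ℚ L] (ζ : L) (hζ : IsPrimitiveRoot ζ 28)
    (x : L) : ∃ (f : ℤ[X]) (n : ℤ), n ≠ 0 ∧ aeval ζ f = n * x := by
  have h : x ∈ Algebra.adjoin ℚ {ζ} := by
    rw [IsCyclotomicExtension.adjoin_primitive_root_eq_top hζ]; trivial
  rw [Algebra.adjoin_singleton_eq_range_aeval] at h
  obtain ⟨F, rfl⟩ := h
  obtain ⟨b, hb0, hb⟩ := IsLocalization.integerNormalization_spec (nonZeroDivisors ℤ) F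
  refine ⟨IsLocalization.integerNormalization (nonZeroDivisors ℤ) F, b,
    nonZeroDivisors.ne_zero hb0, ?_⟩
  · have := congrArg (aeval ζ) hb
    rw [aeval_map_algebraMap] at this
    rw [this]
    simp

theorem aux_norm (ζ : CyclotomicField 28 ℚ) (hζ : IsPrimitiveRoot ζ 28)
    (σ : CyclotomicField 28 ℚ ≃ₐ[ℚ] CyclotomicField 28 ℚ) (hσ : σ ζ = ζ ^ 9)
    (x : CyclotomicField 28 ℚ) :
      algebraMap (IntermediateField.fixedField (Subgroup.zpowers σ)) (CyclotomicField 28 ℚ)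
        (Algebra.norm (IntermediateField.fixedField (Subgroup.zpowers σ)) x)
        = x * σ x * σ (σ x) := by
  have := aux_cyc
  have : IsGalois ℚ (CyclotomicField 28 ℚ) := IsCyclotomicExtension.isGalois {28} ℚ _
  have h28 : ζ ^ 28 = 1 := hζ.pow_eq_one
  have hord : orderOf σ = 3 := by
    have : Fact (Nat.Prime 3) := ⟨by norm_num⟩
    apply orderOf_eq_prime
    · have : ∀ y, y ∈ Algebra.adjoin ℚ {ζ} → (σ^3) y = y := by
        intro y hy
        induction hy using Algebra.adjoin_induction with
        | mem y hy =>
          rw [Set.mem_singleton_iff] at hy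
          subst hy
          change σ (σ (σ y)) = y
          simp only [hσ, map_pow, ← pow_mul]
          calc y ^ _ = (y^28)^26 * y := by ring
            _ = y := by rw [h28]; ring
        | algebraMap r => exact AlgEquiv.commutes _ _
        | add a b _ _ ha hb => rw [map_add, ha, hb]
        | mul a b _ _ ha hb => rw [map_mul, ha, hb]
      ext y
      apply this
      rw [IsCyclotomicExtension.adjoin_primitive_root_eq_top hζ]; trivial
    · intro h
      rw [h] at hσ
      have : ζ ^ 1 = ζ ^ 9 := by simpa using hσ
      have := hζ.pow_inj (by norm_num) (by norm_num) this
      norm_num at this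
  rw [Algebra.norm_eq_prod_automorphisms]
  rw [← Equiv.prod_comp
    (IntermediateField.subgroupEquivAlgEquiv (Subgroup.zpowers σ)).toEquiv]
  have hfin : IsOfFinOrder σ := orderOf_pos_iff.1 (by rw [hord]; norm_num)
  rw [← Equiv.prod_comp ((finCongr hord.symm).trans (finEquivZPowers hfin))]
  rw [Fin.prod_univ_three]
  rfl

theorem aux_final {L : Type*} [Field L] [CharZero L] [Algebra ℚ L]
    [IsCyclotomicExtension {28} ℚ L] (ζ : L) (hζ : IsPrimitiveRoot ζ 28)
    (σ : L ≃ₐ[ℚ] L) (hσ : σ ζ = ζ ^ 9) (x : L)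
    (hx : x * σ x * σ (σ x) = 1 + ζ ^ 7) : False := by
  obtain ⟨f, n, hn, hf⟩ := aux_clear ζ hζ x
  obtain ⟨p, q, hpq⟩ := aux_split (L := L) f
  have h28 : ζ ^ 28 = 1 := hζ.pow_eq_one
  have hw : IsPrimitiveRoot (ζ^4) 7 := hζ.pow (by norm_num) (by norm_num)
  have h14 : ζ ^ 14 = -1 := by
    have : IsPrimitiveRoot (ζ^14) 2 := hζ.pow (by norm_num) (by norm_num)
    exact this.eq_neg_one_of_two_right
  have hi : (ζ^7)^2 = -1 := by rw [← pow_mul]; exact h14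
  have hi' : (-ζ^7)^2 = -1 := by rw [neg_sq]; exact hi
  have hs (y) (g : Polynomial ℤ) :
      σ (Polynomial.aeval y g) = Polynomial.aeval (σ y) g :=
    (Polynomial.aeval_algHom_apply (σ.toAlgHom.restrictScalars ℤ) y g).symm
  have hsn : σ (n * x) = n * σ x := by simp
  have hssn : σ (σ (n * x)) = n * σ (σ x) := by simp
  have E : Polynomial.aeval ζ f * Polynomial.aeval (ζ^9) f * Polynomial.aeval (ζ^81) f
      = n^3 * (1 + ζ^7) := by
    have e1 : Polynomial.aeval (ζ^9) f = n * σ x := by rw [← hσ, ← hs, hf, hsn]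
    have e2 : Polynomial.aeval (ζ^81) f = n * σ (σ x) := by
      rw [← hssn, ← hf, hs, hs, hσ, map_pow, hσ, ← pow_mul]
    rw [hf, e1, e2, ← hx]; ring
  have E' : Polynomial.aeval (ζ^15) f * Polynomial.aeval (ζ^135) f * Polynomial.aeval (ζ^1215) f
      = n^3 * (1 + ζ^105) := by
    obtain ⟨g, hg⟩ := aux_dvd_s19 (by norm_num) hζ
      (p := f * f.comp (.X^9) * f.comp (.X^81) - .C (n^3) * (1 + .X^7))
      (by simp [Polynomial.aeval_comp, sub_eq_zero, E])
    have h15 : IsPrimitiveRoot (ζ^15) 28 := hζ.pow_of_coprime 15 (by norm_num)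
    have h0 : Polynomial.aeval (ζ^15) (Polynomial.cyclotomic 28 ℤ) = 0 := by
      rw [Polynomial.cyclotomic_eq_minpoly h15 (by norm_num)]
      exact minpoly.aeval _ _
    have := congrArg (Polynomial.aeval (ζ^15)) hg
    rw [map_mul, h0, zero_mul] at this
    simp [Polynomial.aeval_comp, ← pow_mul] at this
    exact sub_eq_zero.1 this
  have r (a b : ℕ) (h : a % 28 = b % 28) : ζ^a = ζ^b := by
    rw [← Nat.div_add_mod a 28, ← Nat.div_add_mod b 28, h, pow_add, pow_add, pow_mul, pow_mul, h28]
    simp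
  have neg (a b : ℕ) (h : (a + 14) % 28 = b % 28) : -(ζ^a) = ζ^b := by
    rw [← r _ _ h, pow_add, h14]; ring
  have c1 := hpq (ζ^4) (ζ^7) hi
  have c2 := hpq ((ζ^4)^2) (ζ^7) hi
  have c3 := hpq ((ζ^4)^4) (ζ^7) hi
  have d1 := hpq (ζ^4) (-ζ^7) hi'
  have d2 := hpq ((ζ^4)^2) (-ζ^7) hi'
  have d3 := hpq ((ζ^4)^4) (-ζ^7) hi'
  have z1 : -((ζ^4)^2 * ζ^7) = ζ := by
    rw [← pow_mul, ← pow_add, neg _ 1 (by norm_num), pow_one]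
  have z2 : -(((ζ^4)^2)^2 * ζ^7) = ζ^9 := by
    rw [← pow_mul, ← pow_mul, ← pow_add, neg _ 9 (by norm_num)]
  have z3 : -(((ζ^4)^4)^2 * ζ^7) = ζ^81 := by
    rw [← pow_mul, ← pow_mul, ← pow_add, neg _ 81 (by norm_num)]
  have y1 : -((ζ^4)^2 * -ζ^7) = ζ^15 := by
    rw [mul_neg, neg_neg, ← pow_mul, ← pow_add]
  have y2 : -(((ζ^4)^2)^2 * -ζ^7) = ζ^135 := by
    rw [mul_neg, neg_neg, ← pow_mul, ← pow_mul, ← pow_add]; exact r _ _ (by norm_num)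
  have y3 : -(((ζ^4)^4)^2 * -ζ^7) = ζ^1215 := by
    rw [mul_neg, neg_neg, ← pow_mul, ← pow_mul, ← pow_add]; exact r _ _ (by norm_num)
  have y4 : ζ^105 = -ζ^7 := (neg 7 105 (by norm_num)).symm
  rw [z1] at c1
  rw [z2] at c2
  rw [z3] at c3
  rw [y1] at d1
  rw [y2] at d2
  rw [y3] at d3
  rw [c1, c2, c3] at E
  rw [d1, d2, d3, y4] at E'
  have key (w : L) : Polynomial.aeval w (p^2 + q^2) =
      (Polynomial.aeval w p + ζ^7 * Polynomial.aeval w q) *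
      (Polynomial.aeval w p + -ζ^7 * Polynomial.aeval w q) := by
    simp only [map_add, map_pow]
    linear_combination (Polynomial.aeval w q)^2 * hi
  refine aux_main hw (p^2 + q^2) (n^2) (pow_ne_zero 2 hn) ?_
  rw [key, key, key]
  have EE := congrArg₂ (· * ·) E E'
  push_cast
  calc _ = (n:L)^3 * (1 + ζ^7) * (n^3 * (1 + -ζ^7)) := by rw [← EE]; ring
    _ = _ := by linear_combination (-(n:L)^6) * hi

theorem stmt19 (ζ : CyclotomicField 28 ℚ) (hζ : IsPrimitiveRoot ζ 28)
    (σ : CyclotomicField 28 ℚ ≃ₐ[ℚ] CyclotomicField 28 ℚ) (hσ : σ ζ = ζ ^ 9) :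
    ∀ x : CyclotomicField 28 ℚ,
      algebraMap (IntermediateField.fixedField (Subgroup.zpowers σ)) (CyclotomicField 28 ℚ)
        (Algebra.norm (IntermediateField.fixedField (Subgroup.zpowers σ)) x) ≠ 1 + ζ ^ 7 := by
  intro x hx
  rw [aux_norm ζ hζ σ hσ] at hx
  have := aux_cyc
  exact aux_final ζ hζ σ hσ x hx
end
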